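/- Let r ≥ 1, a ≥ 1, 1 ≤ b ≤ r, and k ≥ 1 be integers with k ≥ r − b + a, and let d_1 ≤ ⋯ ≤ d_k be positive integers. Then the codimension of Φ^{ℙ^r,a}_{d_1,…,d_k}(ℙ^r, Span(r,b)) \ (Φ^{ℙ^r,a}_{d_1,…,d_{k−1}}(ℙ^r) × W_{r,d_k}) in W_{r,d_1}×⋯×W_{r,d_k} is at least −(b+1)(r−b) + min{ Σ_{j=1}^{r−b+a} h_{b, b−i_j+j}(d_{i_j}) : 1 ≤ i_1 < ⋯ < i_{r−b+a} = k }, where (b+1)(r−b) is the dimension of the Grassmannian 𝔾(b,r) of b-planes in ℙ^r. -/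

import Mathlib

open MvPolynomial

noncomputable section

variable (K : Type*) [Field K] (M : Type*) [AddCommGroup M] [Module K M]

/-- Evaluation of a polynomial in the linear functionals of `M` at a point `v : M`.
These are precisely the polynomial functions on the affine space `M`. -/
def polyEval (p : MvPolynomial (M →ₗ[K] K) K) (v : M) : K :=
  MvPolynomial.eval (fun φ : M →ₗ[K] K => φ v) p

lemma polyEval_mul (p q : MvPolynomial (M →ₗ[K] K) K) (v : M) :
    polyEval K M (p * q) v = polyEval K M p v * polyEval K M q v :=
  map_mul (MvPolynomial.eval fun φ : M →ₗ[K] K => φ v) p q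

/-- The collection of Zariski-closed subsets of the affine space `M`:
common zero loci of families of polynomial functions. -/
def zariskiCloseds : Set (Set M) :=
  {s | ∃ S : Set (MvPolynomial (M →ₗ[K] K) K), s = {v | ∀ p ∈ S, polyEval K M p v = 0}}

/-- The Zariski topology on an affine space (vector space) `M` over `K`. -/
def zariskiTopology : TopologicalSpace M := by
  refine TopologicalSpace.ofClosed (zariskiCloseds K M) ⟨{1}, ?_⟩ ?_ ?_
  · ext v
    simp [polyEval]
  · intro A hA
    choose S hS using fun a : A => hA a.2
    refine ⟨⋃ a : A, S a, ?_⟩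
    ext v
    simp only [Set.mem_sInter, Set.mem_setOf_eq, Set.mem_iUnion]
    constructor
    · rintro h p ⟨a, hp⟩
      have := h a a.2
      rw [hS a] at this
      exact this p hp
    · intro h t ht
      have : v ∈ {w | ∀ p ∈ S ⟨t, ht⟩, polyEval K M p w = 0} :=
        fun p hp => h p ⟨⟨t, ht⟩, hp⟩
      rw [← hS ⟨t, ht⟩] at this
      exact this
  · rintro s ⟨S₁, rfl⟩ t ⟨S₂, rfl⟩
    refine ⟨Set.image2 (· * ·) S₁ S₂, ?_⟩
    ext v
    simp only [Set.mem_union, Set.mem_setOf_eq]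
    constructor
    · rintro (h | h) p ⟨p₁, h₁, p₂, h₂, rfl⟩
      · show polyEval K M (p₁ * p₂) v = 0
        rw [polyEval_mul, h p₁ h₁, zero_mul]
      · show polyEval K M (p₁ * p₂) v = 0
        rw [polyEval_mul, h p₂ h₂, mul_zero]
    · intro h
      by_contra hc
      push_neg at hc
      obtain ⟨⟨p₁, h₁, hv₁⟩, ⟨p₂, h₂, hv₂⟩⟩ := hc
      have h12 := h (p₁ * p₂) ⟨p₁, h₁, p₂, h₂, rfl⟩
      rw [polyEval_mul] at h12
      exact mul_ne_zero hv₁ hv₂ h12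

/-- The dimension of a subset of affine space: the Krull dimension of its Zariski closure. -/
def dimSet {M : Type*} [TopologicalSpace M] (s : Set M) : WithBot ℕ∞ :=
  topologicalKrullDim ↥(closure s)

/-- `vdimGE r n F m` says that the common projective vanishing locus
`V(F 0, …, F (n-1)) ⊆ ℙ^r` has dimension at least `m` (with `dim ∅ = -∞`).
This is encoded via the Krull dimension of the homogeneous coordinate ring of the
affine cone: `dim V(F) ≥ m` iff the cone has Krull dimension at least `max m 0 + 1`. -/
def vdimGE {K : Type*} [Field K] (r n : ℕ) (F : Fin n → MvPolynomial (Fin (r + 1)) K)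
    (m : ℤ) : Prop :=
  ((m.toNat + 1 : ℕ) : WithBot ℕ∞) ≤
    ringKrullDim (MvPolynomial (Fin (r + 1)) K ⧸ Ideal.span (Set.range F))

end

noncomputable section Statement3

open MvPolynomial

variable (K : Type*) [Field K]

/-- The affine space `W_{r, d 0} × ⋯ × W_{r, d (n-1)}` of `n`-tuples of homogeneous
forms of degrees `d 0, …, d (n-1)` in the variables `x_0, …, x_r`. -/
abbrev tupleSpace (r n : ℕ) (d : Fin n → ℕ) : Type _ :=
  (i : Fin n) → ↥(homogeneousSubmodule (Fin (r + 1)) K (d i))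

/-- The Zariski topology on the affine space of tuples of forms. -/
instance (r n : ℕ) (d : Fin n → ℕ) : TopologicalSpace (tupleSpace K r n d) :=
  zariskiTopology K _

/-- The function `h_{r,a}(d) = (r-a) * C(d+a-1, d-1) + C(d+a, d)`, as a function of
integer arguments. -/
def hpoly (r a d : ℤ) : ℤ :=
  (r - a) * ((d + a - 1).toNat.choose (d - 1).toNat : ℤ) + ((d + a).toNat.choose d.toNat : ℤ)

/-- An ideal of the polynomial ring is homogeneous iff it contains all the homogeneous
components of each of its elements. -/
def IsHomogeneousIdeal {r : ℕ} (p : Ideal (MvPolynomial (Fin (r + 1)) K)) : Prop :=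
  ∀ f ∈ p, ∀ i : ℕ, MvPolynomial.homogeneousComponent i f ∈ p

/-- The tuple `F` lies in `Φ^{ℙ^r,a}_{d_1,…,d_k}(ℙ^r, Span(r,b))`: the common vanishing locus
`V(F_1, …, F_k) ⊆ ℙ^r` contains an integral closed subscheme of dimension `r - k + a` whose
linear span is exactly a `b`-dimensional linear subspace of `ℙ^r`. The integral closed
subscheme is encoded by its homogeneous prime ideal `p`; its dimension is `n` where the
affine cone `R ⧸ p` has Krull dimension `n + 1`; and its span is the projectivization of
the `(b+1)`-dimensional linear subspace `Λ ⊆ K^{r+1}`, i.e. the degree-one forms in `p` are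
exactly the linear forms vanishing on `Λ`. -/
def memPhiSpan {r n : ℕ} {d : Fin n → ℕ} (a b : ℕ) (F : tupleSpace K r n d) : Prop :=
  ∃ p : Ideal (MvPolynomial (Fin (r + 1)) K), p.IsPrime ∧ IsHomogeneousIdeal K p ∧
    Ideal.span (Set.range fun i => (F i : MvPolynomial (Fin (r + 1)) K)) ≤ p ∧
    (∃ m : ℕ, (m : ℤ) = (r : ℤ) - n + a ∧
      ringKrullDim (MvPolynomial (Fin (r + 1)) K ⧸ p) = ((m + 1 : ℕ) : WithBot ℕ∞)) ∧
    ∃ Λ : Submodule K (Fin (r + 1) → K), Module.finrank K Λ = b + 1 ∧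
      ∀ f : MvPolynomial (Fin (r + 1)) K, f.IsHomogeneous 1 →
        (f ∈ p ↔ ∀ v ∈ Λ, MvPolynomial.eval v f = 0)

/-- Extended coercion of dimensions in `WithBot ℕ∞ = ℕ ∪ {±∞}` into `WithBot (WithTop ℤ)
 = ℤ ∪ {±∞}`, used to compare dimensions with possibly negative integer bounds. -/
def toZDim : WithBot ℕ∞ → WithBot (WithTop ℤ) :=
  WithBot.map (WithTop.map (Nat.cast : ℕ → ℤ))

end Statement3

section part1
open Pointwise

/-- minimal Hilbert function -/
def HH (N n d : ℕ) : ℕ := (d + n).choose n + (N - n) * (if d = 0 then 0 else (d - 1 + n).choose n)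

lemma lp_lemma {E : Type*} [AddCommGroup E] [Module ℚ E] (B : Finset E)
    (h0 : ∃ l : E →ₗ[ℚ] ℚ, ∀ x ∈ B, 1 ≤ l x) :
    ∃ l : E →ₗ[ℚ] ℚ, (∀ x ∈ B, 1 ≤ l x) ∧
      ∀ x ∈ B, x ∈ Submodule.span ℚ {y : E | y ∈ B ∧ l y = 1} := by
  classical
  -- choose l maximizing number of tight constraints
  let f : {l : E →ₗ[ℚ] ℚ // ∀ x ∈ B, 1 ≤ l x} → ℕ := fun l => (B.filter (fun y => l.1 y = 1)).card
  have hne : (Set.range f).Nonempty := by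
    obtain ⟨l, hl⟩ := h0
    exact ⟨_, ⟨l, hl⟩, rfl⟩
  have hbdd : BddAbove (Set.range f) := ⟨B.card, by
    rintro _ ⟨l, rfl⟩
    exact Finset.card_filter_le _ _⟩
  obtain ⟨⟨l, hl⟩, hlmax⟩ := Nat.sSup_mem hne hbdd
  refine ⟨l, hl, ?_⟩
  by_contra hcon
  push Not at hcon
  obtain ⟨x0, hx0, hx0n⟩ := hcon
  obtain ⟨m, hm, hker⟩ := Submodule.exists_le_ker_of_notMem hx0n
  have hker' : ∀ y ∈ B, l y = 1 → m y = 0 := fun y hy hy1 =>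
    hker (Submodule.subset_span ⟨hy, hy1⟩)
  obtain ⟨m, hm, hker'⟩ : ∃ m : E →ₗ[ℚ] ℚ, m x0 < 0 ∧ ∀ y ∈ B, l y = 1 → m y = 0 := by
    rcases lt_or_gt_of_ne hm with h | h
    · exact ⟨m, h, hker'⟩
    · exact ⟨-m, by simpa using h, fun y hy h1 => by simp [hker' y hy h1]⟩
  have hBne : (B.filter (fun y => m y < 0)).Nonempty := ⟨x0, by simp [hx0, hm]⟩
  obtain ⟨z, hz, hzmin⟩ := Finset.exists_min_image _ (fun y => (l y - 1) / (- m y)) hBne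
  simp only [Finset.mem_filter] at hz
  set t := (l z - 1) / (- m z) with ht
  have ht0 : 0 ≤ t := div_nonneg (by linarith [hl z hz.1]) (by linarith [hz.2])
  have hfeas : ∀ x ∈ B, 1 ≤ (l + t • m) x := by
    intro x hx
    simp only [LinearMap.add_apply, LinearMap.smul_apply, smul_eq_mul]
    rcases lt_or_ge (m x) 0 with h | h
    · have := hzmin x (by simp [hx, h])
      rw [le_div_iff₀ (by linarith)] at this
      linarith
    · nlinarith [hl x hx, mul_nonneg ht0 h]
  have hlt : f ⟨l, hl⟩ < f ⟨l + t • m, hfeas⟩ := by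
    apply Finset.card_lt_card
    rw [Finset.ssubset_iff_of_subset]
    · refine ⟨z, ?_, ?_⟩
      · simp only [Finset.mem_filter, LinearMap.add_apply, LinearMap.smul_apply, smul_eq_mul]
        refine ⟨hz.1, ?_⟩
        rw [ht]
        have := hz.2.ne
        field_simp
        ring
      · simp only [Finset.mem_filter, not_and]
        intro _ h1
        exact hz.2.ne (hker' z hz.1 h1)
    · intro y hy
      simp only [Finset.mem_filter, LinearMap.add_apply, LinearMap.smul_apply, smul_eq_mul] at hy ⊢
      exact ⟨hy.1, by rw [hy.2, hker' y hy.1 hy.2]; simp⟩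
  rw [hlmax] at hlt
  exact absurd (le_csSup hbdd ⟨_, rfl⟩) (not_le.mpr hlt)

lemma le_nsmul_of {E : Type*} [AddCommGroup E] [Module ℚ E] [DecidableEq E] (A : Finset E)
    (l : E →ₗ[ℚ] ℚ) (c : ℚ) (h : ∀ x ∈ A, c ≤ l x) (d : ℕ) : ∀ x ∈ d • A, d * c ≤ l x := by
  induction d with
  | zero => simp
  | succ d ih =>
    intro x hx
    rw [succ_nsmul, Finset.mem_add] at hx
    obtain ⟨y, hy, z, hz, rfl⟩ := hx
    have := ih y hy
    have := h z hz
    push_cast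
    rw [map_add]
    linarith

lemma HH_zero (N n : ℕ) : HH N n 0 = 1 := by simp [HH]

lemma HH_mono_N {N N' : ℕ} (h : N ≤ N') (n d : ℕ) : HH N n d ≤ HH N' n d := by
  unfold HH
  gcongr

lemma HH_step (N n d : ℕ) (h : n ≤ N) : HH (N + 1) n (d + 1) = HH N n (d+1) + (d + n).choose n := by
  unfold HH
  simp only [Nat.add_sub_cancel, Nat.succ_ne_zero, if_false]
  rw [show N + 1 - n = (N - n) + 1 by omega]
  ring

lemma HH_sum (N n d : ℕ) :
    ∑ e ∈ Finset.range (d + 1), HH N n e = HH (N + 1) (n + 1) d := by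
  induction d with
  | zero => simp [HH]
  | succ d ih =>
    rw [Finset.sum_range_succ, ih]
    unfold HH
    simp only [Nat.add_sub_cancel, Nat.succ_ne_zero, if_false, Nat.add_sub_add_right]
    have h1 : (d + 1 + (n+1)).choose (n+1) = (d+1+n).choose n + (d + (n+1)).choose (n+1) := by
      rw [show d + 1 + (n+1) = (d + 1 + n) + 1 by ring, Nat.choose_succ_succ]
      congr 2 ; ring
    rw [h1]
    rcases d with _ | d
    · simp
      ring
    · simp only [Nat.add_sub_cancel, Nat.succ_ne_zero, if_false]
      have h2 : (d + 1 + (n+1)).choose (n+1) = (d+1+n).choose n + (d + (n+1)).choose (n+1) := by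
        rw [show d + 1 + (n+1) = (d + 1 + n) + 1 by ring, Nat.choose_succ_succ]
        congr 2 ; ring
      rw [h2]
      ring

lemma nsmul_mono_left {E : Type*} [AddCommGroup E] [DecidableEq E] {A B : Finset E} (h : A ⊆ B)
    (d : ℕ) : d • A ⊆ d • B := Finset.nsmul_subset_nsmul_left h

lemma sumset {E : Type*} [AddCommGroup E] [Module ℚ E] [DecidableEq E] :
    ∀ (N : ℕ) (A : Finset E) (n d : ℕ), A.card = N + 1 →
      n ≤ Module.finrank ℚ (vectorSpan ℚ (A : Set E)) → HH N n d ≤ (d • A).card := by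
  intro N
  induction N using Nat.strong_induction_on with
  | _ N ih =>
  intro A n d hA hn
  rcases d with _ | d
  · simp [HH]
  have hAne : A.Nonempty := by rw [← Finset.card_pos]; omega
  rcases N with _ | N
  · obtain ⟨a, rfl⟩ := Finset.card_eq_one.mp hA
    rw [Finset.coe_singleton, vectorSpan_singleton, finrank_bot] at hn
    obtain rfl : n = 0 := by omega
    simp only [HH, add_zero, Nat.choose_zero_right]
    simpa using (hAne.nsmul : ((d+1) • ({a} : Finset E)).Nonempty)
  -- generic functional
  obtain ⟨ψ, hψ⟩ := Module.exists_dual_forall_apply_ne_zero (K := ℚ) (M := E)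
    (ι := {p : A × A // p.1 ≠ p.2}) (fun p => (p.1.1 : E) - p.1.2) (fun p => by
      rw [sub_ne_zero]; exact fun h => p.2 (Subtype.ext h))
  obtain ⟨a, haA, hamin⟩ := Finset.exists_min_image A ψ hAne
  have hpos : ∀ x ∈ A, x ≠ a → 0 < ψ (x - a) := by
    intro x hx hxa
    have h1 := hψ ⟨(⟨x, hx⟩, ⟨a, haA⟩), by simpa using hxa⟩
    have h2 := hamin x hx
    simp only [map_sub] at h1 ⊢
    exact lt_of_le_of_ne (by linarith) (Ne.symm h1)
  set A' := A.erase a with hA'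
  have hA'card : A'.card = N + 1 := by rw [hA', Finset.card_erase_of_mem haA]; omega
  have hins : insert a A' = A := Finset.insert_erase haA
  have hA'sub : A' ⊆ A := Finset.erase_subset _ _
  by_cases hdim : n ≤ Module.finrank ℚ (vectorSpan ℚ (A' : Set E))
  · -- case 1
    have IH := ih N (by omega) A' n (d+1) hA'card hdim
    have hnN : n ≤ N := by
      refine hdim.trans ?_
      have := finrank_vectorSpan_image_finset_le ℚ (id : E → E) A' hA'card
      rwa [Finset.image_id] at this
    rw [HH_step _ _ _ hnN]
    -- LP
    let B := A'.image (fun x => x - a)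
    obtain ⟨l, hl1, hl2⟩ := lp_lemma B (by
      have hA'ne : A'.Nonempty := by rw [← Finset.card_pos]; omega
      obtain ⟨y, hy, hymin⟩ := Finset.exists_min_image A' (fun x => ψ (x - a)) hA'ne
      have hy0 := hpos y (hA'sub hy) (Finset.ne_of_mem_erase hy)
      refine ⟨(ψ (y - a))⁻¹ • ψ, fun x hx => ?_⟩
      obtain ⟨x, hx', rfl⟩ := Finset.mem_image.mp hx
      simp only [LinearMap.smul_apply, smul_eq_mul]
      rw [inv_mul_eq_div, le_div_iff₀ hy0, one_mul]
      exact hymin x hx')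
    -- tight set
    set Ti : Set E := {y : E | y ∈ B ∧ l y = 1} with hTi
    have hspan : vectorSpan ℚ (A : Set E) ≤ Submodule.span ℚ Ti := by
      rw [vectorSpan_eq_span_vsub_set_right ℚ (Finset.mem_coe.mpr haA), Submodule.span_le]
      rintro _ ⟨x, hx, rfl⟩
      by_cases hxa : x = a
      · simp [hxa]
      · exact hl2 _ (Finset.mem_image_of_mem _ (Finset.mem_erase.mpr ⟨hxa, hx⟩))
    have hTifin : Ti.Finite := (B.finite_toSet).subset (fun y hy => hy.1)
    haveI : FiniteDimensional ℚ (Submodule.span ℚ Ti) := FiniteDimensional.span_of_finite ℚ hTifin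
    obtain ⟨g, hg1, hg2, hg3⟩ := Submodule.exists_fun_fin_finrank_span_eq ℚ Ti
    have hn' : n ≤ Module.finrank ℚ (Submodule.span ℚ Ti) := hn.trans (Submodule.finrank_mono hspan)
    let g' : Fin n → E := fun i => g (Fin.castLE hn' i)
    have hg' : LinearIndependent ℚ g' := hg3.comp _ (Fin.castLE_injective hn')
    let C : Finset E := insert a (Finset.univ.image (fun i => g' i + a))
    have hCcard : C.card = n + 1 := by
      rw [Finset.card_insert_of_notMem, Finset.card_image_of_injective, Finset.card_univ,
        Fintype.card_fin]
      · intro i j hij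
        exact hg'.injective (add_right_cancel hij)
      · simp only [Finset.mem_image, Finset.mem_univ, true_and, not_exists]
        intro i hi
        exact hg'.ne_zero i (by simpa using hi)
    have hCdim : n ≤ Module.finrank ℚ (vectorSpan ℚ (C : Set E)) := by
      have hle : Submodule.span ℚ (Set.range g') ≤ vectorSpan ℚ (C : Set E) := by
        rw [Submodule.span_le]
        rintro _ ⟨i, rfl⟩
        have : g' i = (g' i + a) -ᵥ a := by simp
        rw [this]
        exact vsub_mem_vectorSpan ℚ (by simp [C]) (by simp [C])
      haveI : FiniteDimensional ℚ (vectorSpan ℚ (C : Set E)) :=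
        finiteDimensional_vectorSpan_of_finite ℚ C.finite_toSet
      have := Submodule.finrank_mono hle
      rwa [finrank_span_eq_card hg', Fintype.card_fin] at this
    have IH2 := ih n (by omega) C n d hCcard hCdim
    have hCA : C ⊆ A := by
      intro x hx
      simp only [C, Finset.mem_insert, Finset.mem_image, Finset.mem_univ, true_and] at hx
      rcases hx with rfl | ⟨i, rfl⟩
      · exact haA
      · have := (hg1 (Fin.castLE hn' i)).1
        obtain ⟨y, hy, hy2⟩ := Finset.mem_image.mp this
        have : g' i + a = y := by simp only [g']; rw [← hy2]; simp
        rw [this]; exact hA'sub hy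
    have hCl : ∀ x ∈ C, -1 - l a ≤ (-l) x := by
      intro x hx
      simp only [C, Finset.mem_insert, Finset.mem_image, Finset.mem_univ, true_and] at hx
      rcases hx with rfl | ⟨i, rfl⟩
      · simp
      · have := (hg1 (Fin.castLE hn' i)).2
        simp only [LinearMap.neg_apply, map_add, g']
        rw [this]; linarith
    have hA'l : ∀ x ∈ A', 1 + l a ≤ l x := by
      intro x hx
      have := hl1 (x - a) (Finset.mem_image_of_mem _ hx)
      rw [map_sub] at this
      linarith
    have hdisj : Disjoint ((d+1) • A') ({a} + d • C) := by
      rw [Finset.disjoint_left]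
      intro x hx hx2
      have h1 := le_nsmul_of A' l _ hA'l _ x hx
      rw [Finset.mem_add] at hx2
      obtain ⟨y, hy, z, hz, rfl⟩ := hx2
      rw [Finset.mem_singleton] at hy
      subst hy
      have h2 := le_nsmul_of C (-l) _ hCl _ z hz
      simp only [LinearMap.neg_apply] at h2
      rw [map_add] at h1
      push_cast at h1
      nlinarith
    have hsub : (d+1) • A' ∪ ({a} + d • C) ⊆ (d+1) • A := by
      apply Finset.union_subset (nsmul_mono_left hA'sub _)
      rw [succ_nsmul, add_comm (d • A)]
      exact Finset.add_subset_add (by simpa using haA) (nsmul_mono_left hCA _)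
    have := Finset.card_le_card hsub
    rw [Finset.card_union_of_disjoint hdisj, Finset.card_singleton_add] at this
    have hHH : HH n n d = (d + n).choose n := by simp [HH]
    omega
  · -- case 2
    push Not at hdim
    obtain ⟨n, rfl⟩ : ∃ n', n = n' + 1 := ⟨n - 1, by omega⟩
    have hle : n + 1 ≤ Module.finrank ℚ (vectorSpan ℚ (A' : Set E)) + 1 := by
      refine hn.trans ?_
      rw [← hins, Finset.coe_insert]
      exact finrank_vectorSpan_insert_le_set ℚ (A' : Set E) a
    have hA'ne : A'.Nonempty := by rw [← Finset.card_pos]; omega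
    obtain ⟨a', ha'⟩ := hA'ne
    have hnot : a - a' ∉ vectorSpan ℚ (A' : Set E) := by
      intro hmem
      have hle2 : vectorSpan ℚ (A : Set E) ≤ vectorSpan ℚ (A' : Set E) := by
        rw [vectorSpan_eq_span_vsub_set_right ℚ (Finset.mem_coe.mpr (hA'sub ha')), Submodule.span_le]
        rintro _ ⟨x, hx, rfl⟩
        by_cases hxa : x = a
        · rw [hxa]; exact hmem
        · exact vsub_mem_vectorSpan ℚ (Finset.mem_coe.mpr (Finset.mem_erase.mpr ⟨hxa, hx⟩)) ha'
      haveI : FiniteDimensional ℚ (vectorSpan ℚ (A' : Set E)) :=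
        finiteDimensional_vectorSpan_of_finite ℚ A'.finite_toSet
      have := Submodule.finrank_mono hle2
      omega
    obtain ⟨f, hf1, hf2⟩ := Submodule.exists_le_ker_of_notMem hnot
    have hfA' : ∀ x ∈ A', f x = f a' := by
      intro x hx
      have : x -ᵥ a' ∈ LinearMap.ker f := hf2 (vsub_mem_vectorSpan ℚ hx ha')
      rw [LinearMap.mem_ker, vsub_eq_sub, map_sub] at this
      linarith
    have hfn : ∀ e : ℕ, ∀ x ∈ e • A', f x = e * f a' := by
      intro e x hx
      have h1 := le_nsmul_of A' f (f a') (fun x hx => (hfA' x hx).ge) e x hx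
      have h2 := le_nsmul_of A' (-f) (- f a') (fun x hx => by simp [hfA' x hx]) e x hx
      simp only [LinearMap.neg_apply] at h2
      linarith
    rw [← HH_sum]
    have hsub : (Finset.range (d + 1 + 1)).biUnion (fun e => {(d + 1 - e) • a} + e • A')
        ⊆ (d+1) • A := by
      intro x hx
      simp only [Finset.mem_biUnion, Finset.mem_range] at hx
      obtain ⟨e, he, hx⟩ := hx
      have : (d+1) • A = (d + 1 - e) • A + e • A := by
        rw [← add_nsmul]; congr 1; omega
      rw [this]
      refine Finset.add_subset_add ?_ (nsmul_mono_left hA'sub _) hx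
      simp only [Finset.singleton_subset_iff]
      exact Finset.nsmul_mem_nsmul haA
    refine le_trans ?_ (Finset.card_le_card hsub)
    rw [Finset.card_biUnion]
    · refine Finset.sum_le_sum fun e he => ?_
      rw [Finset.card_singleton_add]
      exact ih N (by omega) A' n e hA'card (by omega)
    · intro e he e' he' hee
      simp only [Finset.mem_range, Finset.mem_coe] at he he'
      show Disjoint _ _
      rw [Finset.disjoint_left]
      intro x hx hx'
      rw [Finset.mem_add] at hx hx'
      obtain ⟨y, hy, z, hz, rfl⟩ := hx
      obtain ⟨y', hy', z', hz', h⟩ := hx'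
      rw [Finset.mem_singleton] at hy hy'
      subst hy hy'
      have h := congrArg f h
      rw [map_add, map_add, hfn e z hz, hfn e' z' hz', map_nsmul, map_nsmul] at h
      simp only [nsmul_eq_mul] at h
      rw [Nat.cast_sub (by omega), Nat.cast_sub (by omega)] at h
      have h3 : ((e : ℚ) - e') * (f (a - a')) = 0 := by
        rw [map_sub]; linear_combination h
      rcases mul_eq_zero.mp h3 with h4 | h4
      · exact hee (by exact_mod_cast sub_eq_zero.mp h4)
      · exact hf1 h4

end part1

section part2
open Pointwise

section hahn
variable {Γ k E : Type*} [AddCommGroup Γ] [LinearOrder Γ] [IsOrderedAddMonoid Γ] [Field k]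
  [Field E] [Algebra (HahnSeries Γ k) E]

lemma orderTop_inv_hahn {h : HahnSeries Γ k} (hh : h ≠ 0) : h.orderTop + (h⁻¹).orderTop = 0 := by
  rw [← HahnSeries.orderTop_mul, mul_inv_cancel₀ hh, HahnSeries.orderTop_one]

lemma exists_val_ext : ∃ W : ValuationSubring E,
    (∀ h : HahnSeries Γ k, 0 ≤ h.orderTop → W.valuation (algebraMap _ E h) ≤ 1) ∧
    (∀ h : HahnSeries Γ k, 0 < h.orderTop → W.valuation (algebraMap _ E h) < 1) := by
  let A0 : Subring (HahnSeries Γ k) :=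
    { carrier := {h | 0 ≤ h.orderTop}
      zero_mem' := by simp
      one_mem' := by simp
      add_mem' := fun {a b} ha hb =>
        show 0 ≤ (a + b).orderTop from (le_min ha hb).trans HahnSeries.min_orderTop_le_orderTop_add
      neg_mem' := fun {a} ha => by simpa using ha
      mul_mem' := fun {a b} ha hb => by
        show 0 ≤ (a * b).orderTop
        rw [HahnSeries.orderTop_mul]; exact add_nonneg ha hb }
  let A : Subring E := A0.map (algebraMap _ E)
  have hinj : Function.Injective (algebraMap (HahnSeries Γ k) E) := FaithfulSMul.algebraMap_injective _ _
  let I : Ideal A :=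
    { carrier := {a | ∃ h : HahnSeries Γ k, 0 < h.orderTop ∧ algebraMap _ E h = a}
      zero_mem' := ⟨0, by simp, by simp⟩
      add_mem' := by
        rintro _ _ ⟨a, ha, ha'⟩ ⟨b, hb, hb'⟩
        exact ⟨a + b, lt_of_lt_of_le (lt_min ha hb) HahnSeries.min_orderTop_le_orderTop_add,
          by simp [ha', hb']⟩
      smul_mem' := by
        rintro ⟨_, c, hc, rfl⟩ _ ⟨a, ha, ha'⟩
        refine ⟨c * a, ?_, by simp [ha']⟩
        rw [HahnSeries.orderTop_mul]
        exact lt_of_lt_of_le ha (le_add_of_nonneg_left hc) }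
  have hI : I ≠ ⊤ := by
    intro h
    rw [Ideal.eq_top_iff_one] at h
    obtain ⟨a, ha, ha'⟩ := h
    have : a = 1 := hinj (by simpa using ha')
    subst this
    simp at ha
  obtain ⟨W, hW1, hW2⟩ := Ideal.image_subset_nonunits_valuationSubring I hI
  refine ⟨W, fun h hh => ?_, fun h hh => ?_⟩
  · rw [W.valuation_le_one_iff]
    exact hW1 ⟨h, hh, rfl⟩
  · rw [← ValuationSubring.mem_nonunits_iff]
    exact hW2 ⟨⟨algebraMap _ E h, ⟨h, hh.le, rfl⟩⟩, ⟨h, hh, rfl⟩, rfl⟩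

variable (W : ValuationSubring E)

lemma val_one_of_order
    (h1 : ∀ h : HahnSeries Γ k, 0 ≤ h.orderTop → W.valuation (algebraMap _ E h) ≤ 1)
    {h : HahnSeries Γ k} (hh : h.orderTop = 0) :
    W.valuation (algebraMap _ E h) = 1 := by
  have h0 : h ≠ 0 := by rintro rfl; simp at hh
  apply le_antisymm (h1 h hh.ge)
  have := orderTop_inv_hahn h0
  rw [hh, zero_add] at this
  have := h1 _ this.ge
  rw [map_inv₀, map_inv₀] at this
  refine (inv_le_one₀ ?_).mp this
  exact zero_lt_iff.mpr (by simpa using h0)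

lemma order_of_val_one
    (h2 : ∀ h : HahnSeries Γ k, 0 < h.orderTop → W.valuation (algebraMap _ E h) < 1)
    {h : HahnSeries Γ k} (hh : W.valuation (algebraMap _ E h) = 1) :
    h.orderTop = 0 := by
  have h0 : h ≠ 0 := by rintro rfl; simp at hh
  have hi := orderTop_inv_hahn h0
  rcases lt_trichotomy h.orderTop 0 with h3 | h3 | h3
  · exfalso
    have : 0 < (h⁻¹).orderTop := by
      by_contra hcon
      push Not at hcon
      have e1 : h.orderTop ≠ ⊤ := by simpa using h0
      have e2 : (h⁻¹).orderTop ≠ ⊤ := by simpa using h0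
      generalize h.orderTop = x at *
      generalize (h⁻¹).orderTop = y at *
      lift x to Γ using e1
      lift y to Γ using e2
      norm_cast at hi h3 hcon
      exact absurd hi (add_neg_of_neg_of_nonpos h3 hcon).ne
    have := h2 _ this
    rw [map_inv₀, map_inv₀, hh] at this
    simp at this
  · exact h3
  · have := h2 _ h3
    rw [hh] at this
    exact absurd this (lt_irrefl _)

lemma residue_k [IsAlgClosed k] [Algebra.IsAlgebraic (HahnSeries Γ k) E]
    (h1 : ∀ h : HahnSeries Γ k, 0 ≤ h.orderTop → W.valuation (algebraMap _ E h) ≤ 1)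
    (h2 : ∀ h : HahnSeries Γ k, 0 < h.orderTop → W.valuation (algebraMap _ E h) < 1)
    (u : E)
    (hu : W.valuation u = 1) :
    ∃ c : k, W.valuation (u - algebraMap (HahnSeries Γ k) E (HahnSeries.C c)) < 1 := by
  classical
  obtain ⟨p, hp0, hp⟩ := Algebra.IsAlgebraic.isAlgebraic (R := HahnSeries Γ k) u
  obtain ⟨i0, hi0, hmin⟩ := Finset.exists_min_image p.support (fun i => (p.coeff i).orderTop)
    (by simpa using hp0)
  have hc0 : p.coeff i0 ≠ 0 := by simpa using hi0
  set q := Polynomial.C (p.coeff i0)⁻¹ * p with hq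
  have hqu : Polynomial.aeval u q = 0 := by simp [hq, hp]
  have hqi0 : q.coeff i0 = 1 := by simp [hq, hc0]
  have hqc : ∀ i, 0 ≤ (q.coeff i).orderTop := by
    intro i
    by_cases hi : p.coeff i = 0
    · simp [hq, hi]
    · have := hmin i (by simpa using hi)
      rw [hq, Polynomial.coeff_C_mul, HahnSeries.orderTop_mul, ← orderTop_inv_hahn hc0, add_comm]
      gcongr
  -- reduce
  let g : Polynomial k := ∑ i ∈ Finset.range (q.natDegree + 1), Polynomial.monomial i ((q.coeff i).coeff 0)
  have hgc : ∀ i, g.coeff i = (q.coeff i).coeff 0 := by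
    intro i
    simp only [g, Polynomial.finsetSum_coeff, Polynomial.coeff_monomial]
    rw [Finset.sum_ite_eq']
    split_ifs with h
    · rfl
    · rw [Polynomial.coeff_eq_zero_of_natDegree_lt (by simpa using h)]; simp
  have hg0 : g ≠ 0 := by
    intro h
    have := hgc i0
    rw [h, hqi0] at this
    simp at this
  let f : k →+* E := (algebraMap (HahnSeries Γ k) E).comp HahnSeries.C
  have hfv : ∀ c : k, c ≠ 0 → W.valuation (f c) = 1 := fun c hc => by
    refine val_one_of_order W h1 ?_
    show (HahnSeries.single 0 c).orderTop = 0
    rw [HahnSeries.orderTop_single hc]; rfl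
  have hgu : W.valuation (g.eval₂ f u) < 1 := by
    have : g.eval₂ f u = - ∑ i ∈ Finset.range (q.natDegree + 1),
        algebraMap _ E (q.coeff i - HahnSeries.C ((q.coeff i).coeff 0)) * u ^ i := by
      rw [Polynomial.aeval_eq_sum_range] at hqu
      simp only [g, Polynomial.eval₂_finsetSum, Polynomial.eval₂_monomial, map_sub, sub_mul,
        Finset.sum_sub_distrib]
      simp only [Algebra.smul_def] at hqu
      rw [hqu]
      simp [f]
    rw [this, Valuation.map_neg]
    apply Valuation.map_sum_lt _ one_ne_zero
    intro i _
    rw [map_mul, map_pow, hu, one_pow, mul_one]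
    apply h2
    rw [lt_iff_le_and_ne]
    constructor
    · rw [sub_eq_add_neg]
      refine le_trans (le_min (hqc i) ?_) HahnSeries.min_orderTop_le_orderTop_add
      rw [HahnSeries.orderTop_neg]
      exact HahnSeries.orderTop_single_le
    · intro h
      have hne : (q.coeff i - HahnSeries.C ((q.coeff i).coeff 0)).coeff 0 = 0 := by simp
      exact HahnSeries.coeff_orderTop_ne h.symm hne
  have hsp := IsAlgClosed.splits g
  by_contra hcon
  push Not at hcon
  rw [hsp.eq_prod_roots] at hgu
  rw [Polynomial.eval₂_mul, Polynomial.eval₂_C, map_mul, hfv _ (by simpa using hg0), one_mul,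
    Polynomial.eval₂_multiset_prod, Multiset.map_map, map_multiset_prod, Multiset.map_map] at hgu
  refine absurd hgu (not_lt.mpr ?_)
  apply Multiset.one_le_prod
  intro x hx
  obtain ⟨c, _, rfl⟩ := Multiset.mem_map.mp hx
  simpa [f] using hcon c
end hahn

end part2

section part3
open Pointwise

section vals
variable {k E Γ₀ : Type*} [Field k] [Field E] [Algebra k E] [LinearOrderedCommGroupWithZero Γ₀]
  (v : Valuation E Γ₀)

lemma vals_indep (hv : ∀ c : k, c ≠ 0 → v (algebraMap k E c) = 1) {ι : Type*} (x : ι → E)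
    (hx : ∀ i, x i ≠ 0) (hinj : Function.Injective (fun i => v (x i))) : LinearIndependent k x := by
  classical
  rw [linearIndependent_iff']
  intro s g hs
  by_contra hcon
  push Not at hcon
  obtain ⟨i1, hi1, hgi1⟩ := hcon
  obtain ⟨i, hi, hmax⟩ := Finset.exists_max_image (s.filter (fun i => g i ≠ 0)) (fun i => v (x i))
    ⟨i1, by simp [hi1, hgi1]⟩
  simp only [Finset.mem_filter] at hi hmax
  rw [← Finset.add_sum_erase _ _ hi.1] at hs
  have h1 : v (g i • x i) = v (x i) := by
    rw [Algebra.smul_def, map_mul, hv _ hi.2, one_mul]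
  have h2 : v (∑ j ∈ s.erase i, g j • x j) < v (x i) := by
    apply Valuation.map_sum_lt
    · simpa using hx i
    · intro j hj
      rw [Finset.mem_erase] at hj
      by_cases hgj : g j = 0
      · simp only [hgj, zero_smul, map_zero]
        exact zero_lt_iff.mpr (by simpa using hx i)
      · rw [Algebra.smul_def, map_mul, hv _ hgj, one_mul]
        exact lt_of_le_of_ne (hmax j ⟨hj.2, hgj⟩) (fun h => hj.1 (hinj h))
  rw [add_eq_zero_iff_eq_neg] at hs
  rw [← h1, hs, Valuation.map_neg] at h2
  exact lt_irrefl _ h2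

variable {T : Type*} (lam : E → T)

lemma vals_card_le (hv : ∀ c : k, c ≠ 0 → v (algebraMap k E c) = 1)
    (hlam : ∀ x y : E, x ≠ 0 → y ≠ 0 → (lam x = lam y ↔ v x = v y)) (V : Submodule k E)
    [FiniteDimensional k V] (B : Finset T) (hB : ∀ t ∈ B, ∃ x ∈ V, x ≠ 0 ∧ lam x = t) :
    B.card ≤ Module.finrank k V := by
  choose! f hf using hB
  have : LinearIndependent k (fun t : B => (⟨f t, (hf t t.2).1⟩ : V)) := by
    rw [← LinearMap.linearIndependent_iff V.subtype (by simp)]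
    refine vals_indep v hv _ (fun t => (hf t t.2).2.1) ?_
    intro t t' h
    have := (hlam _ _ (hf t t.2).2.1 (hf t' t'.2).2.1).mpr h
    rw [(hf t t.2).2.2, (hf t' t'.2).2.2] at this
    exact Subtype.ext this
  simpa using this.fintype_card_le_finrank

lemma vals_exists (hv : ∀ c : k, c ≠ 0 → v (algebraMap k E c) = 1)
    (hres : ∀ u, v u = 1 → ∃ c : k, v (u - algebraMap k E c) < 1)
    (hlam : ∀ x y : E, x ≠ 0 → y ≠ 0 → (lam x = lam y ↔ v x = v y)) (V : Submodule k E)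
    [FiniteDimensional k V] :
    ∃ A : Finset T, (∀ t, t ∈ A ↔ ∃ x ∈ V, x ≠ 0 ∧ lam x = t) ∧ Module.finrank k V ≤ A.card := by
  classical
  have hfin : {t | ∃ x ∈ V, x ≠ 0 ∧ lam x = t}.Finite := by
    by_contra hinf
    obtain ⟨B, hB, hBc⟩ := (Set.not_finite.mp hinf : Set.Infinite _).exists_subset_card_eq
      (Module.finrank k V + 1)
    have := vals_card_le v lam hv hlam V B (fun t ht => hB ht)
    omega
  refine ⟨hfin.toFinset, by simp, ?_⟩
  have hmem : ∀ t ∈ hfin.toFinset, ∃ x ∈ V, x ≠ 0 ∧ lam x = t := by simp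
  choose! f hf using hmem
  have hle : V ≤ Submodule.span k (hfin.toFinset.image f : Set E) := by
    by_contra hcon
    obtain ⟨y, hyV, hy⟩ := Set.not_subset.mp hcon
    set S := Submodule.span k (hfin.toFinset.image f : Set E) with hS
    have hSV : S ≤ V := by
      rw [hS, Submodule.span_le]
      intro z hz
      simp only [Finset.coe_image, Set.mem_image, Finset.mem_coe] at hz
      obtain ⟨t, ht, rfl⟩ := hz
      exact (hf t ht).1
    have hvfin : (v '' {z | z ∈ V ∧ z ∉ S}).Finite := by
      have : (v '' {z | z ∈ V ∧ z ∉ S}) ⊆ (fun t => v (f t)) '' hfin.toFinset := by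
        rintro _ ⟨z, ⟨hz, hzS⟩, rfl⟩
        have hz0 : z ≠ 0 := fun h => hzS (h ▸ S.zero_mem)
        have ht : lam z ∈ hfin.toFinset := by simpa using ⟨z, hz, hz0, rfl⟩
        exact ⟨lam z, ht, (hlam _ _ (hf _ ht).2.1 hz0).mp (hf _ ht).2.2⟩
      exact (Set.toFinite _).subset this
    obtain ⟨γ, hγ, hmin⟩ := Set.exists_min_image _ id hvfin ⟨v y, y, ⟨hyV, hy⟩, rfl⟩
    obtain ⟨z, ⟨hz, hzS⟩, rfl⟩ := hγ
    have hz0 : z ≠ 0 := fun h => hzS (h ▸ S.zero_mem)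
    have ht : lam z ∈ hfin.toFinset := by simpa using ⟨z, hz, hz0, rfl⟩
    have hfz := (hlam _ _ (hf _ ht).2.1 hz0).mp (hf _ ht).2.2
    have hf0 := (hf _ ht).2.1
    obtain ⟨c, hc⟩ := hres (z / f (lam z)) (by
      rw [map_div₀, hfz, div_self]; simpa using hz0)
    have hfS : f (lam z) ∈ S := Submodule.subset_span (by
      simp only [Finset.coe_image]; exact ⟨_, ht, rfl⟩)
    have hz' : z - c • f (lam z) ∈ V ∧ z - c • f (lam z) ∉ S := by
      refine ⟨V.sub_mem hz (V.smul_mem _ (hf _ ht).1), fun h => hzS ?_⟩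
      have := S.add_mem h (S.smul_mem c hfS)
      simpa using this
    have h1 := hmin _ ⟨_, hz', rfl⟩
    simp only [id] at h1
    have : z - c • f (lam z) = (z / f (lam z) - algebraMap k E c) * f (lam z) := by
      rw [sub_mul, div_mul_cancel₀ _ hf0, Algebra.smul_def]
    rw [this, map_mul, hfz] at h1
    have h0 : 0 < v z := zero_lt_iff.mpr (by simpa using hz0)
    exact absurd h1 (not_le.mpr (by
      calc _ < 1 * v z := mul_lt_mul_of_pos_right hc h0
        _ = v z := one_mul _))
  calc Module.finrank k V ≤ Module.finrank k (Submodule.span k (hfin.toFinset.image f : Set E)) := by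
        have : FiniteDimensional k (Submodule.span k (hfin.toFinset.image f : Set E)) :=
          FiniteDimensional.span_finset k _
        exact Submodule.finrank_mono hle
    _ ≤ (hfin.toFinset.image f).card := finrank_span_finset_le_card _
    _ ≤ _ := Finset.card_image_le

end vals

lemma hf_abstract {k E Γ₀ : Type*} [Field k] [Field E] [Algebra k E]
    [LinearOrderedCommGroupWithZero Γ₀] (v : Valuation E Γ₀)
    (hv : ∀ c : k, c ≠ 0 → v (algebraMap k E c) = 1)
    (hres : ∀ u, v u = 1 → ∃ c : k, v (u - algebraMap k E c) < 1)
    (V : ℕ → Submodule k E) [∀ d, FiniteDimensional k (V d)]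
    (h0 : 1 ∈ V 0) (hmul : ∀ d, ∀ x ∈ V d, ∀ y ∈ V 1, x * y ∈ V (d + 1))
    (b n : ℕ) (hb : b + 1 ≤ Module.finrank k (V 1))
    (y : Fin (n + 1) → E) (hyV : ∀ i, y i ∈ V 1) (hy0 : ∀ i, y i ≠ 0)
    (hy : ∀ m : Fin (n + 1) → ℤ, v (∏ i, y i ^ m i) = 1 → m = 0) (d : ℕ) :
    HH b n d ≤ Module.finrank k (V d) := by
  classical
  let G := Additive (Γ₀ˣ)
  let T := DivisibleHull G
  let lam : E → T := fun x => if h : x = 0 then 0 else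
    ((Additive.ofMul (Units.mk0 (v x) (by simpa using h)) : G) : DivisibleHull G)
  have hlam : ∀ x y : E, x ≠ 0 → y ≠ 0 → (lam x = lam y ↔ v x = v y) := by
    intro x y hx hy
    simp only [lam, hx, hy, dif_neg, not_false_eq_true]
    rw [DivisibleHull.coe_inj, Additive.ofMul.injective.eq_iff, Units.mk0_inj]
  have hlmul : ∀ x y : E, x ≠ 0 → y ≠ 0 → lam (x * y) = lam x + lam y := by
    intro x y hx hy
    simp only [lam, hx, hy, mul_ne_zero hx hy, dif_neg, not_false_eq_true]
    rw [← DivisibleHull.coe_add, DivisibleHull.coe_inj, ← ofMul_mul]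
    congr 1
    ext
    simp
  have hl1 : lam 1 = 0 := by
    have := hlmul 1 1 one_ne_zero one_ne_zero
    simpa using this
  obtain ⟨A, hA, hAc⟩ := vals_exists v lam hv hres hlam (V 1)
  have hprod : ∀ d : ℕ, ∀ t ∈ d • A, ∃ x ∈ V d, x ≠ 0 ∧ lam x = t := by
    intro d
    induction d with
    | zero =>
      intro t ht
      have ht0 : t = 0 := by simpa using ht
      exact ⟨1, h0, one_ne_zero, by rw [hl1, ht0]⟩
    | succ d ih =>
      intro t ht
      rw [succ_nsmul, Finset.mem_add] at ht
      obtain ⟨s, hs, s', hs', rfl⟩ := ht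
      obtain ⟨x, hx, hx0, rfl⟩ := ih s hs
      obtain ⟨z, hz, hz0, rfl⟩ := (hA s').mp hs'
      exact ⟨x * z, hmul d x hx z hz, mul_ne_zero hx0 hz0, hlmul _ _ hx0 hz0⟩
  refine le_trans ?_ (vals_card_le v lam hv hlam (V d) (d • A) (hprod d))
  obtain ⟨N, hN⟩ : ∃ N, A.card = N + 1 := ⟨A.card - 1, by omega⟩
  refine (HH_mono_N (show b ≤ N by omega) n d).trans ?_
  refine sumset N A n d hN ?_
  -- affine dimension
  have hli : LinearIndependent ℚ (fun i => lam (y i)) := by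
    rw [← LinearIndependent.iff_fractionRing ℤ ℚ, Fintype.linearIndependent_iff]
    intro m hm
    have hnat : ∀ (x : E), x ≠ 0 → ∀ e : ℕ, lam (x ^ e) = e • lam x := by
      intro x hx e
      induction e with
      | zero => simp [hl1]
      | succ e ih => rw [pow_succ, hlmul _ _ (pow_ne_zero _ hx) hx, ih, succ_nsmul]
    have hinv : ∀ (x : E), x ≠ 0 → lam (x⁻¹) = - lam x := by
      intro x hx
      have := hlmul x x⁻¹ hx (inv_ne_zero hx)
      rw [mul_inv_cancel₀ hx, hl1] at this
      exact (neg_eq_of_add_eq_zero_right this.symm).symm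
    have hint : ∀ (x : E), x ≠ 0 → ∀ e : ℤ, lam (x ^ e) = e • lam x := by
      intro x hx e
      rcases e with e | e
      · simpa using hnat x hx e
      · rw [zpow_negSucc, hinv _ (pow_ne_zero _ hx), hnat _ hx, negSucc_zsmul]
    have hpr : ∀ s : Finset (Fin (n+1)), lam (∏ i ∈ s, y i ^ m i) = ∑ i ∈ s, m i • lam (y i) := by
      intro s
      induction s using Finset.induction_on with
      | empty => simp [hl1]
      | insert a s ha ih =>
        rw [Finset.prod_insert ha, Finset.sum_insert ha, hlmul _ _ (zpow_ne_zero _ (hy0 a))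
          (Finset.prod_ne_zero_iff.mpr fun i _ => zpow_ne_zero _ (hy0 i)), ih, hint _ (hy0 a)]
    rw [← hpr, ← hl1, hlam _ _ (Finset.prod_ne_zero_iff.mpr fun i _ => zpow_ne_zero _ (hy0 i))
      one_ne_zero, map_one] at hm
    exact fun i => congrFun (hy m hm) i
  have haff := hli.affineIndependent
  have hfr : Module.finrank ℚ (vectorSpan ℚ (Set.range fun i => lam (y i))) = n :=
    haff.finrank_vectorSpan (by simp)
  have : FiniteDimensional ℚ (vectorSpan ℚ (A : Set T)) :=
    finiteDimensional_vectorSpan_of_finite ℚ A.finite_toSet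
  rw [← hfr]
  apply Submodule.finrank_mono
  apply vectorSpan_mono
  rintro _ ⟨i, rfl⟩
  exact (hA _).mpr ⟨_, hyV i, hy0 i, rfl⟩

end part3

section part4
open MvPolynomial

/-- monomials of Hahn series -/
noncomputable def sgl (n : ℕ) (k : Type*) [Field k] :
    Multiplicative (Lex (Fin n → ℤ)) →* HahnSeries (Lex (Fin n → ℤ)) k where
  toFun g := HahnSeries.single g.toAdd 1
  map_one' := by simp
  map_mul' x y := by simp [HahnSeries.single_mul_single]

noncomputable def sgz (n : ℕ) (k : Type*) [Field k] (i : Fin n) : HahnSeries (Lex (Fin n → ℤ)) k :=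
  sgl n k (Multiplicative.ofAdd (toLex (Pi.single i 1)))

lemma sgz_prod (n : ℕ) (k : Type*) [Field k] (m : Fin n → ℤ) :
    ∏ i, sgz n k i ^ m i = HahnSeries.single (toLex m) 1 := by
  have : ∏ i, sgz n k i ^ m i = sgl n k (Multiplicative.ofAdd (toLex m)) := by
    simp only [sgz, ← map_zpow, ← map_prod]
    congr 1
    rw [← Multiplicative.toAdd.injective.eq_iff]
    simp only [toAdd_prod, toAdd_zpow, toAdd_ofAdd]
    apply ofLex.injective
    rw [ofLex_toLex]
    funext j
    have : ∀ s : Finset (Fin n), (ofLex (∑ i ∈ s, m i • (toLex (Pi.single i (1:ℤ)) : Lex (Fin n → ℤ)))) j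
        = ∑ i ∈ s, m i * (Pi.single i (1:ℤ) : Fin n → ℤ) j := by
      intro s
      induction s using Finset.induction_on with
      | empty => simp; rfl
      | insert a s ha ih => rw [Finset.sum_insert ha, Finset.sum_insert ha, ← ih]; rfl
    rw [this]
    simp [Pi.single_apply]
  rw [this]; rfl

lemma sgz_indep (n : ℕ) (k : Type*) [Field k] : AlgebraicIndependent k (sgz n k) := by
  rw [algebraicIndependent_iff]
  intro p hp
  ext m
  have : (aeval (sgz n k) p).coeff (toLex (fun i => (m i : ℤ))) = coeff m p := by
    rw [aeval_def, eval₂_eq', HahnSeries.coeff_sum]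
    simp only [HahnSeries.algebraMap_apply]
    have h1 : ∀ d : Fin n →₀ ℕ, ∏ i, sgz n k i ^ d i = HahnSeries.single (toLex fun i => (d i : ℤ)) 1 := by
      intro d; rw [← sgz_prod]; simp
    simp only [h1, HahnSeries.C_mul_eq_smul, HahnSeries.coeff_smul, HahnSeries.coeff_single]
    rw [Finset.sum_eq_single m]
    · simp
    · intro d _ hd
      rw [if_neg, smul_zero]
      intro h
      apply hd
      ext i
      have := congrFun (toLex.injective h) i
      simpa using this.symm
    · intro hm
      rw [notMem_support_iff.mp hm]; simp
  rw [← this, hp]; simp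

lemma embed_tb {k A E ι : Type*} [Field k] [CommRing A] [IsDomain A] [Algebra k A] [Field E]
    [IsAlgClosed E] [Algebra k E] {x : ι → A} (hx : IsTranscendenceBasis k x) {z : ι → E}
    (hz : AlgebraicIndependent k z) : ∃ f : A →ₐ[k] E, Function.Injective f ∧ ∀ i, f (x i) = z i := by
  let e := hx.1.aevalEquiv
  let g : Algebra.adjoin k (Set.range x) →ₐ[k] E := (aeval z).comp e.symm.toAlgHom
  have hg : Function.Injective g := by
    have : Function.Injective (aeval z : MvPolynomial ι k →ₐ[k] E) := hz
    exact this.comp e.symm.injective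
  letI : Algebra (Algebra.adjoin k (Set.range x)) E := g.toRingHom.toAlgebra
  have : IsScalarTower k (Algebra.adjoin k (Set.range x)) E := IsScalarTower.of_algebraMap_eq
    (fun c => (g.commutes c).symm)
  have hFS : FaithfulSMul (Algebra.adjoin k (Set.range x)) E :=
      (faithfulSMul_iff_algebraMap_injective _ _).mpr hg
  have : Module.IsTorsionFree (Algebra.adjoin k (Set.range x)) E :=
    Module.IsTorsionFree.trans_faithfulSMul _ E E
  have := hx.isAlgebraic
  let f : A →ₐ[Algebra.adjoin k (Set.range x)] E := IsAlgClosed.lift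
  refine ⟨f.restrictScalars k, ?_, ?_⟩
  · rw [injective_iff_map_eq_zero]
    intro a ha
    by_contra ha0
    have h1 := Ideal.comap_ne_bot_of_algebraic_mem (I := RingHom.ker f) (R := Algebra.adjoin k (Set.range x)) ha0 ha
      (Algebra.IsAlgebraic.isAlgebraic a)
    apply h1
    rw [eq_bot_iff]
    intro c hc
    rw [Ideal.mem_comap, RingHom.mem_ker, f.commutes] at hc
    exact hg (by rw [map_zero]; exact hc)
  · intro i
    have : f (algebraMap _ A (e (X i))) = algebraMap _ E (e (X i)) := f.commutes _
    have h2 : (algebraMap _ A (e (X i))) = x i := by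
      rw [AlgebraicIndependent.algebraMap_aevalEquiv]; simp
    rw [h2] at this
    show f (x i) = _
    rw [this]
    show aeval z (e.symm (e (X i))) = _
    simp

theorem hilbert_bound {k : Type*} [Field k] [IsAlgClosed k] {σ : Type*} [Finite σ]
    (P : Ideal (MvPolynomial σ k)) [P.IsPrime] (b n : ℕ) (J : Fin (b + 1) → σ)
    (hJ : ∀ c : Fin (b + 1) → k, ∑ j, C (c j) * X (J j) ∈ P → c = 0)
    (J' : Fin (n + 1) → σ)
    (hJ' : IsTranscendenceBasis k (fun j => Ideal.Quotient.mk P (X (J' j)))) (d : ℕ) :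
    HH b n d ≤ Module.finrank k ((homogeneousSubmodule σ k d).map (Ideal.Quotient.mkₐ k P).toLinearMap) := by
  classical
  let Γ := Lex (Fin (n + 1) → ℤ)
  let H := HahnSeries Γ k
  let E := AlgebraicClosure H
  have hz : AlgebraicIndependent k (fun i => algebraMap H E (sgz (n+1) k i)) :=
    (sgz_indep (n+1) k).map' (f := IsScalarTower.toAlgHom k H E) (FaithfulSMul.algebraMap_injective H E)
  obtain ⟨f, hf, hfx⟩ := embed_tb hJ' hz
  obtain ⟨W, h1, h2⟩ := exists_val_ext (Γ := Γ) (k := k) (E := E)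
  let g : MvPolynomial σ k →ₐ[k] E := f.comp (Ideal.Quotient.mkₐ k P)
  have hfd : ∀ d, FiniteDimensional k (homogeneousSubmodule σ k d) := fun d =>
    Module.Finite.iff_fg.mpr (homogeneousSubmodule_fg _ _ _)
  let V : ℕ → Submodule k E := fun d => (homogeneousSubmodule σ k d).map g.toLinearMap
  have hVfd : ∀ d, FiniteDimensional k (V d) := fun d => by
    have := hfd d
    infer_instance
  have halg : ∀ c : k, algebraMap k E c = algebraMap H E (HahnSeries.C c) := by
    intro c; rw [IsScalarTower.algebraMap_apply k H E]; rfl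
  have hgX : ∀ j, g (X (J' j)) = algebraMap H E (sgz (n+1) k j) := fun j => hfx j
  have main := hf_abstract (k := k) W.valuation (fun c hc => ?_) (fun u hu => ?_) V ?_ ?_ b n ?_
    (fun j => g (X (J' j))) ?_ ?_ ?_ d
  · refine main.trans_eq ?_
    have : V d = ((homogeneousSubmodule σ k d).map (Ideal.Quotient.mkₐ k P).toLinearMap).map f.toLinearMap := by
      rw [← Submodule.map_comp]; rfl
    rw [this]
    exact (LinearEquiv.finrank_eq (Submodule.equivMapOfInjective f.toLinearMap hf _)).symm
  · rw [halg]
    refine val_one_of_order W h1 ?_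
    show (HahnSeries.single 0 c).orderTop = 0
    rw [HahnSeries.orderTop_single hc]; rfl
  · obtain ⟨c, hc⟩ := residue_k W h1 h2 u hu
    exact ⟨c, by rw [halg]; exact hc⟩
  · exact ⟨1, isHomogeneous_one _ _, by simp⟩
  · rintro d _ ⟨p, hp, rfl⟩ _ ⟨q, hq, rfl⟩
    exact ⟨p * q, IsHomogeneous.mul hp hq, by simp⟩
  · have hli : LinearIndependent k (fun j : Fin (b+1) => (⟨g (X (J j)), ⟨X (J j), isHomogeneous_X _ _, rfl⟩⟩ : V 1)) := by
      rw [← LinearMap.linearIndependent_iff (V 1).subtype (by simp), Fintype.linearIndependent_iff]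
      intro c hc
      have : c = 0 := hJ c (by
        rw [← Ideal.Quotient.eq_zero_iff_mem]
        apply hf
        rw [map_zero]
        have h3 : g (∑ j, C (c j) * X (J j)) = 0 := by
          rw [map_sum, ← hc]
          refine Finset.sum_congr rfl fun j _ => ?_
          rw [← smul_eq_C_mul, map_smul]; rfl
        exact h3)
      exact fun i => congrFun this i
    simpa using hli.fintype_card_le_finrank
  · exact fun i => ⟨_, isHomogeneous_X _ _, rfl⟩
  · intro i
    rw [hgX]
    have : (HahnSeries.single (toLex (Pi.single i 1 : Fin (n+1) → ℤ)) (1 : k)) ≠ 0 :=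
      HahnSeries.single_ne_zero one_ne_zero
    exact fun h => this ((map_eq_zero _).mp h)
  · intro m hm
    simp only [hgX, ← map_zpow₀, ← map_prod] at hm
    rw [sgz_prod] at hm
    have := order_of_val_one W h2 hm
    rw [HahnSeries.orderTop_single one_ne_zero] at this
    exact toLex.injective (WithTop.coe_injective this)

end part4

section part5
open MvPolynomial

section trd
variable {k : Type*} [Field k]

lemma le_trdeg_iff {A : Type*} [CommRing A] [IsDomain A] [Algebra k A] (n : ℕ) :
    (n : Cardinal) ≤ Algebra.trdeg k A ↔ ∃ x : Fin n → A, AlgebraicIndependent k x := by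
  constructor
  · intro h
    obtain ⟨s, hs⟩ := exists_isTranscendenceBasis k A
    rw [← hs.cardinalMk_eq_trdeg] at h
    obtain ⟨t, ht, htn⟩ := Cardinal.le_mk_iff_exists_subset.mp h
    have : Nonempty (Fin n ≃ t) := by
      rw [← Cardinal.lift_mk_eq', htn]; simp
    obtain ⟨e⟩ := this
    refine ⟨fun i => (e i : A), ?_⟩
    have h1 := hs.1.comp (fun i : Fin n => (⟨e i, ht (e i).2⟩ : s)) (by
      intro i j hij
      have := congrArg (fun z : s => (z : A)) hij
      exact e.injective (Subtype.ext this))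
    exact h1
  · rintro ⟨x, hx⟩
    have := hx.lift_cardinalMk_le_trdeg
    simpa using this

lemma trdeg_drop {A : Type*} [CommRing A] [Algebra k A] (P Q : Ideal A) [P.IsPrime] [Q.IsPrime]
    (h : P < Q) (n : ℕ) (hn : (n : Cardinal) ≤ Algebra.trdeg k (A ⧸ Q)) :
    ((n + 1 : ℕ) : Cardinal) ≤ Algebra.trdeg k (A ⧸ P) := by
  rw [le_trdeg_iff] at hn
  obtain ⟨x, hx⟩ := hn
  obtain ⟨f, hfQ, hfP⟩ := SetLike.exists_of_lt h
  choose y hy using fun i => Ideal.Quotient.mk_surjective (x i)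
  let π : (A ⧸ P) →ₐ[k] (A ⧸ Q) := Ideal.Quotient.factorₐ k h.le
  have hπ : ∀ a, π (Ideal.Quotient.mk P a) = Ideal.Quotient.mk Q a := fun a => rfl
  let z : Fin n → A ⧸ P := fun i => Ideal.Quotient.mk P (y i)
  have hz : AlgebraicIndependent k z := by
    apply AlgebraicIndependent.of_comp (f := π)
    have : π ∘ z = x := by funext i; simp [z, hπ, hy]
    rwa [this]
  have htr : Transcendental (Algebra.adjoin k (Set.range z)) (Ideal.Quotient.mk P f) := by
    intro halg
    obtain ⟨q, hq0, hq⟩ := halg.exists_nonzero_coeff_and_aeval_eq_zero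
      (mem_nonZeroDivisors_of_ne_zero (by rwa [Ne, Ideal.Quotient.eq_zero_iff_mem]))
    apply hq0
    have h1 : π (q.coeff 0 : A ⧸ P) = 0 := by
      have h2 : Polynomial.aeval (Ideal.Quotient.mk P f) q
        = Polynomial.aeval (Ideal.Quotient.mk P f) q.divX * Ideal.Quotient.mk P f
          + (q.coeff 0 : A ⧸ P) := by
        conv_lhs => rw [← Polynomial.divX_mul_X_add q]
        simp
      rw [hq] at h2
      have h3 := congrArg π h2
      rw [map_add, map_mul, hπ, map_zero, Ideal.Quotient.eq_zero_iff_mem.mpr hfQ, mul_zero, zero_add] at h3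
      exact h3.symm
    have hc := (Algebra.adjoin_range_eq_range_aeval k z).le (q.coeff 0).2
    obtain ⟨g, hg⟩ := hc
    have h4 : aeval x g = 0 := by
      rw [← h1, ← hg]
      have : x = π ∘ z := by funext i; simp [z, hπ, hy]
      rw [this]; exact (MvPolynomial.comp_aeval_apply (φ := π) (f := z) g).symm
    have := (algebraicIndependent_iff.mp hx) g h4
    subst this
    ext; rw [← hg]; simp
  have := (hz.option_iff_transcendental (Ideal.Quotient.mk P f)).mpr htr
  have := this.lift_cardinalMk_le_trdeg
  simpa using this

end trd


end part5

section part6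
open MvPolynomial

section trd
variable {k : Type*} [Field k]

lemma aeval_rename_X_helper {σ τ : Type*} (f : σ → τ) (q : MvPolynomial σ k) :
    rename f q = aeval (fun j => (X (f j) : MvPolynomial τ k)) q := by
  have : rename f = aeval (R := k) (fun j => (X (f j) : MvPolynomial τ k)) := by
    ext; simp
  rw [this]

lemma mvpoly_ht1 (n : ℕ) (p : Ideal (MvPolynomial (Fin (n+1)) k)) [p.IsPrime] (hp : p.height ≤ 1) :
    (n : Cardinal) ≤ Algebra.trdeg k (MvPolynomial (Fin (n+1)) k ⧸ p) := by
  classical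
  have hrin : ∀ (i : Fin (n+1)) (q : MvPolynomial (Fin n) k), rename i.succAbove q = 0 → q = 0 :=
    fun i q h => rename_injective i.succAbove Fin.succAbove_right_injective (h.trans (map_zero _).symm)
  have key : ∃ i : Fin (n+1), ∀ q : MvPolynomial (Fin n) k, rename i.succAbove q ∈ p → q = 0 := by
    by_cases hb : p = ⊥
    · refine ⟨0, fun q hq => ?_⟩
      rw [hb, Ideal.mem_bot] at hq
      exact hrin 0 q hq
    · have h1 : p.height = 1 := by
        apply le_antisymm hp
        rw [Order.one_le_iff_ne_zero]
        intro h0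
        exact hb (Ideal.height_eq_zero_iff_eq_bot.mp h0)
      obtain ⟨g, hgp, hg⟩ := Ideal.IsPrime.exists_mem_prime_of_ne_bot ‹_› hb
      have hpg := p.eq_span_singleton_of_height_eq_one h1 hgp hg
      have hv : g.vars.Nonempty := by
        rw [Finset.nonempty_iff_ne_empty]
        intro he
        have := (vars_eq_empty_iff_eq_C (p := g)).mp he
        apply hg.not_isUnit
        rw [this]
        rw [this] at hg
        exact (IsUnit.mk0 _ (fun h => hg.ne_zero (by rw [h, C_0]))).map C
      obtain ⟨i, hi⟩ := hv
      refine ⟨i, fun q hq => ?_⟩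
      rw [hpg, Ideal.mem_span_singleton] at hq
      obtain ⟨h, hh⟩ := hq
      by_contra hq0
      have hr0 : rename i.succAbove q ≠ 0 := by
        intro h
        exact hq0 (hrin i q h)
      have hh0 : h ≠ 0 := by rintro rfl; exact hr0 (by rw [hh, mul_zero])
      have hdeg := degreeOf_mul_eq (n := i) hg.ne_zero hh0
      rw [← hh] at hdeg
      have hd0 : degreeOf i (rename i.succAbove q) = 0 := by
        by_contra hne
        have : i ∈ (rename i.succAbove q).vars := by
          rw [vars_def, Multiset.mem_toFinset]
          rw [degreeOf_def] at hne
          exact Multiset.count_ne_zero.mp hne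
        have := vars_rename _ _ this
        simp at this
      have hg0 : degreeOf i g ≠ 0 := by
        rw [degreeOf_def]
        rw [vars_def, Multiset.mem_toFinset] at hi
        exact Multiset.count_ne_zero.mpr hi
      omega
  obtain ⟨i, hi⟩ := key
  rw [le_trdeg_iff]
  refine ⟨fun j => Ideal.Quotient.mk p (X (i.succAbove j)), ?_⟩
  rw [algebraicIndependent_iff]
  intro q hq
  apply hi
  rw [← Ideal.Quotient.eq_zero_iff_mem, ← hq]
  have : rename i.succAbove q = aeval (fun j => (X (i.succAbove j) : MvPolynomial (Fin (n+1)) k)) q := by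
    rw [← aeval_rename_X_helper]
  rw [this]
  exact (MvPolynomial.comp_aeval_apply (φ := Ideal.Quotient.mkₐ k p) _ q)

lemma drop_dom {S : Type*} [CommRing S] [IsDomain S] [Algebra k S] [Algebra.FiniteType k S]
    (M : Ideal S) [M.IsPrime] (f : S) (hf : f ∈ M) :
    ∃ q : Ideal S, q.IsPrime ∧ q ≤ M ∧ f ∈ q ∧ ∀ n : ℕ, ((n+1 : ℕ) : Cardinal) ≤ Algebra.trdeg k S →
      (n : Cardinal) ≤ Algebra.trdeg k (S ⧸ q) := by
  obtain ⟨q, hq, hqM⟩ := Ideal.exists_minimalPrimes_le ((Ideal.span_singleton_le_iff_mem M).mpr hf)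
  haveI hqp : q.IsPrime := hq.isPrime
  haveI : IsNoetherianRing S := Algebra.FiniteType.isNoetherianRing k S
  refine ⟨q, hqp, hqM, hq.le (Ideal.mem_span_singleton_self f), fun n hn => ?_⟩
  have hq1 := Ideal.height_le_one_of_isPrincipal_of_mem_minimalPrimes _ q hq
  obtain ⟨s, g, hgi, hgint⟩ := exists_integral_inj_algHom_of_fg k S
  letI : Algebra (MvPolynomial (Fin s) k) S := g.toRingHom.toAlgebra
  haveI : IsScalarTower k (MvPolynomial (Fin s) k) S := IsScalarTower.of_algebraMap_eq (fun x => (g.commutes x).symm)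
  haveI : Algebra.IsIntegral (MvPolynomial (Fin s) k) S := ⟨hgint⟩
  haveI : FaithfulSMul (MvPolynomial (Fin s) k) S := (faithfulSMul_iff_algebraMap_injective _ _).mpr hgi
  have htb := (IsTranscendenceBasis.mvPolynomial (Fin s) k).algebraMap_comp (A := S)
  have hcard := htb.lift_cardinalMk_eq_trdeg
  simp at hcard
  rw [← hcard] at hn
  have hn' : n + 1 ≤ s := by exact_mod_cast hn
  obtain ⟨s', rfl⟩ : ∃ s', s = s' + 1 := ⟨s - 1, by omega⟩
  let p := q.under (MvPolynomial (Fin (s'+1)) k)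
  haveI : q.LiesOver p := ⟨rfl⟩
  haveI : p.IsPrime := inferInstance
  have hp1 : p.height ≤ 1 := by
    have := Ideal.height_eq_height_add_of_liesOver_of_hasGoingDown p q
    exact le_trans (by rw [this]; exact le_self_add) hq1
  have h1 := mvpoly_ht1 s' p hp1
  have h2 : Algebra.trdeg k (MvPolynomial (Fin (s'+1)) k ⧸ p) ≤ _ := le_rfl
  have hns : n ≤ s' := by omega
  obtain ⟨x, hx⟩ := (le_trdeg_iff _).mp (le_trans (Nat.cast_le.mpr hns) h1)
  rw [le_trdeg_iff]
  let ψ : (MvPolynomial (Fin (s'+1)) k ⧸ p) →ₐ[k] (S ⧸ q) :=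
    Ideal.quotientMapₐ q g (le_refl _)
  refine ⟨fun i => ψ (x i), hx.map' (f := ψ) ?_⟩
  exact Ideal.quotientMap_injective' (f := g.toRingHom) (I := q) (J := p) (H := le_refl _) (le_refl _)

lemma drop_alg {R : Type*} [CommRing R] [Algebra k R] [Algebra.FiniteType k R]
    (P M : Ideal R) [P.IsPrime] [M.IsPrime] (hPM : P ≤ M) (f : R) (hf : f ∈ M) :
    ∃ Q : Ideal R, Q.IsPrime ∧ P ≤ Q ∧ Q ≤ M ∧ f ∈ Q ∧
     ∀ n : ℕ, ((n+1 : ℕ) : Cardinal) ≤ Algebra.trdeg k (R ⧸ P) →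
      (n : Cardinal) ≤ Algebra.trdeg k (R ⧸ Q) := by
  haveI : (M.map (Ideal.Quotient.mk P)).IsPrime := 
    Ideal.map_isPrime_of_surjective Ideal.Quotient.mk_surjective (by simpa using hPM)
  obtain ⟨q, hq, hqM, hfq, h⟩ := drop_dom (k := k) (M.map (Ideal.Quotient.mk P)) (Ideal.Quotient.mk P f)
    (Ideal.mem_map_of_mem _ hf)
  refine ⟨q.comap (Ideal.Quotient.mk P), inferInstance, ?_, ?_, hfq, ?_⟩
  · intro x hx
    rw [Ideal.mem_comap, Ideal.Quotient.eq_zero_iff_mem.mpr hx]; exact zero_mem _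
  · intro x hx
    have := hqM hx
    rw [Ideal.mem_quotient_iff_mem_sup, sup_eq_left.mpr hPM] at this
    exact this
  · intro n hn
    refine le_trans (h n hn) (trdeg_le_of_surjective
      (Ideal.quotientMapₐ (R₁ := k) q (Ideal.Quotient.mkₐ k P) (le_refl _) : (R ⧸ q.comap (Ideal.Quotient.mk P)) →ₐ[k] ((R ⧸ P) ⧸ q)) ?_)
    exact Ideal.quotientMap_surjective (H := le_refl _) Ideal.Quotient.mk_surjective
end trd

end part6

section part7
open MvPolynomial

section trd
variable {k : Type*} [Field k]

lemma trdeg_mono {R : Type*} [CommRing R] [Algebra k R] (P Q : Ideal R) (h : P ≤ Q) :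
    Algebra.trdeg k (R ⧸ Q) ≤ Algebra.trdeg k (R ⧸ P) :=
  trdeg_le_of_surjective (Ideal.Quotient.factorₐ k h) (Ideal.Quotient.factor_surjective h)

lemma chain_trdeg {R : Type*} [CommRing R] [Algebra k R] (n : ℕ) : ∀ (s : ℕ → Ideal R)
    (_ : ∀ i, i ≤ n → (s i).IsPrime) (_ : ∀ i, i < n → s i < s (i+1)),
    (n : Cardinal) ≤ Algebra.trdeg k (R ⧸ s 0) := by
  induction n with
  | zero => intros; simp
  | succ n ih =>
    intro s hp hs
    have hh := ih (fun i => s (i+1)) (fun i hi => hp _ (by omega)) (fun i hi => hs _ (by omega))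
    haveI := hp 0 (by omega)
    haveI := hp 1 (by omega)
    exact trdeg_drop (s 0) (s 1) (hs 0 (by omega)) n hh

lemma chain_exists {R : Type*} [CommRing R] [Algebra k R] [Algebra.FiniteType k R] (n : ℕ) :
    ∀ (P : Ideal R) [P.IsPrime], (n : Cardinal) ≤ Algebra.trdeg k (R ⧸ P) →
    ∃ l : LTSeries (PrimeSpectrum R), l.length = n ∧ P ≤ l.head.asIdeal := by
  induction n with
  | zero => intro P hP _; exact ⟨RelSeries.singleton _ ⟨P, hP⟩, rfl, le_rfl⟩
  | succ n ih =>
    intro P hP hn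
    obtain ⟨M, hM, hPM⟩ := Ideal.exists_le_maximal P hP.ne_top
    have hlt : P < M := by
      apply lt_of_le_of_ne hPM
      rintro rfl
      letI : Field (R ⧸ P) := Ideal.Quotient.field P
      haveI : Module.Finite k (R ⧸ P) := finite_of_finite_type_of_isJacobsonRing k (R ⧸ P)
      have := trdeg_eq_zero (R := k) (A := R ⧸ P)
      rw [this] at hn
      simp at hn
    obtain ⟨f, hfM, hfP⟩ := SetLike.exists_of_lt hlt
    obtain ⟨Q, hQ, hPQ, hQM, hfQ, h⟩ := drop_alg (k := k) P M hPM f hfM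
    obtain ⟨l, hl, hl0⟩ := ih Q (h n hn)
    have hPl : P < l.head.asIdeal :=
      lt_of_lt_of_le (lt_of_le_of_ne hPQ (by rintro rfl; exact hfP hfQ)) hl0
    exact ⟨l.cons ⟨P, hP⟩ hPl, by simp [hl], by simp⟩

lemma dim_ge_of_trdeg {R : Type*} [CommRing R] [Algebra k R] [Algebra.FiniteType k R] (I P : Ideal R)
    [P.IsPrime] (hIP : I ≤ P) (n : ℕ) (hn : (n : Cardinal) ≤ Algebra.trdeg k (R ⧸ P)) :
    ((n : ℕ) : WithBot ℕ∞) ≤ ringKrullDim (R ⧸ I) := by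
  obtain ⟨l, hl, h0⟩ := chain_exists n P hn
  rw [ringKrullDim_quotient]
  let l' : LTSeries (PrimeSpectrum.zeroLocus (R := R) I) := 
    { length := l.length
      toFun := fun i => ⟨l i, (hIP.trans h0).trans (l.head_le i)⟩
      step := fun i => l.step i }
  rw [← hl]
  exact Order.LTSeries.length_le_krullDim l'

lemma trdeg_ge_of_dim {R : Type*} [CommRing R] [Algebra k R] (P : Ideal R)
    [P.IsPrime] (n : ℕ) (hn : ((n : ℕ) : WithBot ℕ∞) ≤ ringKrullDim (R ⧸ P)) :
    (n : Cardinal) ≤ Algebra.trdeg k (R ⧸ P) := by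
  rw [ringKrullDim, Order.le_krullDim_iff] at hn
  obtain ⟨l, hl⟩ := hn
  have hle : ∀ i, P ≤ (l i).asIdeal.comap (Ideal.Quotient.mk P) := by
    intro i x hx
    rw [Ideal.mem_comap, Ideal.Quotient.eq_zero_iff_mem.mpr hx]; exact zero_mem _
  have := chain_trdeg (k := k) n (fun i => (l ⟨min i n, by omega⟩).asIdeal.comap (Ideal.Quotient.mk P))
    (fun i _ => inferInstance) (by
      intro i hi
      have h1 : l ⟨min i n, by omega⟩ < l ⟨min (i+1) n, by omega⟩ := l.strictMono (by
        rw [Fin.mk_lt_mk]; omega)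
      have h2 : (l ⟨min i n, by omega⟩).asIdeal < (l ⟨min (i+1) n, by omega⟩).asIdeal := h1
      exact lt_of_le_of_ne (Ideal.comap_mono h2.le) (fun h => h2.ne
        (Ideal.comap_injective_of_surjective _ Ideal.Quotient.mk_surjective h)))
  exact le_trans this (trdeg_mono _ _ (hle _))

/-- coordinates transcendence basis -/
lemma coord_tb {σ : Type*} (P : Ideal (MvPolynomial σ k)) [P.IsPrime] (n : ℕ)
    (hn : Algebra.trdeg k (MvPolynomial σ k ⧸ P) = n) :
    ∃ J : Fin n → σ, Function.Injective J ∧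
      IsTranscendenceBasis k (fun j => Ideal.Quotient.mk P (X (J j))) := by
  classical
  have halg : Algebra.IsAlgebraic
     (Algebra.adjoin k (Set.range (fun i : σ => Ideal.Quotient.mk P (X i)))) (MvPolynomial σ k ⧸ P) := by
    have : Algebra.adjoin k (Set.range (fun i : σ => Ideal.Quotient.mk P (X i))) = ⊤ := by
      rw [eq_top_iff]
      intro y _
      obtain ⟨z, rfl⟩ := Ideal.Quotient.mk_surjective y
      rw [Algebra.adjoin_range_eq_range_aeval]
      refine ⟨z, ?_⟩
      have := MvPolynomial.comp_aeval_apply (φ := Ideal.Quotient.mkₐ k P) (f := (X : σ → MvPolynomial σ k)) z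
      rw [aeval_X_left_apply] at this
      exact this.symm
    rw [this]
    exact ⟨fun x => isAlgebraic_algebraMap (⟨x, trivial⟩ : (⊤ : Subalgebra k (MvPolynomial σ k ⧸ P)))⟩
  haveI := (faithfulSMul_iff_algebraMap_injective k (MvPolynomial σ k ⧸ P)).mpr (algebraMap k _).injective
  obtain ⟨t, ht, htb⟩ := exists_isTranscendenceBasis_subset (R := k) 
    (Set.range (fun i : σ => Ideal.Quotient.mk P (X i)))
  have hc := htb.cardinalMk_eq_trdeg
  rw [hn] at hc
  have : Nonempty (Fin n ≃ t) := by
      rw [← Cardinal.lift_mk_eq', hc]; simp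
  obtain ⟨e⟩ := this
  choose J hJ using fun j => ht (e j).2
  refine ⟨J, ?_, ?_⟩
  · intro i j hij
    apply e.injective
    apply Subtype.ext
    rw [← hJ, ← hJ, hij]
  · have := (isTranscendenceBasis_equiv e).mpr htb
    have h2 : (fun j => Ideal.Quotient.mk P (X (J j))) = (fun x : t => (x : MvPolynomial σ k ⧸ P)) ∘ e := by
      funext j; exact hJ j
    rw [h2]; exact this

lemma coord_indep {σ : Type*} [Finite σ] (P : Ideal (MvPolynomial σ k)) [P.IsPrime] (n : ℕ)
    (hn : (n : Cardinal) ≤ Algebra.trdeg k (MvPolynomial σ k ⧸ P)) :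
    ∃ J : Fin n → σ, ∀ q : MvPolynomial (Fin n) k, rename J q ∈ P → q = 0 := by
  have hfin : Algebra.trdeg k (MvPolynomial σ k ⧸ P) < Cardinal.aleph0 := trdeg_lt_aleph0_of_finiteType
  obtain ⟨N, hN⟩ := Cardinal.lt_aleph0.mp hfin
  obtain ⟨J, hJ, htb⟩ := coord_tb P N hN
  rw [hN] at hn
  have hnN : n ≤ N := by exact_mod_cast hn
  refine ⟨J ∘ Fin.castLE hnN, fun q hq => ?_⟩
  have h1 := htb.1.comp (Fin.castLE hnN) (Fin.castLE_injective hnN)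
  apply (algebraicIndependent_iff.mp h1) q
  rw [← Ideal.Quotient.eq_zero_iff_mem] at hq
  rw [← hq, aeval_rename_X_helper]
  exact (MvPolynomial.comp_aeval_apply (φ := Ideal.Quotient.mkₐ k P) _ q).symm

lemma trdeg_ge_of_coord {σ : Type*} (P : Ideal (MvPolynomial σ k)) [P.IsPrime] (n : ℕ)
    (J : Fin n → σ) (hJ : ∀ q : MvPolynomial (Fin n) k, rename J q ∈ P → q = 0) :
    (n : Cardinal) ≤ Algebra.trdeg k (MvPolynomial σ k ⧸ P) := by
  rw [le_trdeg_iff]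
  refine ⟨fun j => Ideal.Quotient.mk P (X (J j)), ?_⟩
  rw [algebraicIndependent_iff]
  intro q hq
  apply hJ
  rw [← Ideal.Quotient.eq_zero_iff_mem, ← hq, aeval_rename_X_helper]
  exact (MvPolynomial.comp_aeval_apply (φ := Ideal.Quotient.mkₐ k P) _ q)

end trd

end part7

section part8
open MvPolynomial

section bc
variable {L Ω : Type*} [Field L] [Field Ω] [Algebra L Ω] {σ : Type*}

noncomputable def cmap (φ : Ω →ₗ[L] L) (f : MvPolynomial σ Ω) : MvPolynomial σ L :=
  ∑ m ∈ f.support, monomial m (φ (coeff m f))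

lemma coeff_cmap (φ : Ω →ₗ[L] L) (f : MvPolynomial σ Ω) (m : σ →₀ ℕ) :
    coeff m (cmap φ f) = φ (coeff m f) := by
  classical
  rw [cmap, coeff_sum]
  simp only [coeff_monomial]
  rw [Finset.sum_ite_eq']
  split_ifs with h
  · rfl
  · rw [notMem_support_iff.mp h, map_zero]

lemma cmap_add (φ : Ω →ₗ[L] L) (f g : MvPolynomial σ Ω) : cmap φ (f + g) = cmap φ f + cmap φ g := by
  ext m; simp [coeff_cmap]

lemma cmap_zero (φ : Ω →ₗ[L] L) : cmap φ (0 : MvPolynomial σ Ω) = 0 := by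
  ext m; simp [coeff_cmap]

lemma cmap_mul (φ : Ω →ₗ[L] L) (p : MvPolynomial σ L) (g : MvPolynomial σ Ω) :
    cmap φ (g * MvPolynomial.map (algebraMap L Ω) p) = cmap φ g * p := by
  classical
  ext m
  rw [coeff_cmap, coeff_mul, coeff_mul, map_sum]
  refine Finset.sum_congr rfl fun x _ => ?_
  rw [coeff_map, coeff_cmap, mul_comm, ← Algebra.smul_def, map_smul, smul_eq_mul, mul_comm]

lemma cmap_map (φ : Ω →ₗ[L] L) (h1 : φ 1 = 1) (p : MvPolynomial σ L) :
    cmap φ (MvPolynomial.map (algebraMap L Ω) p) = p := by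
  ext m
  rw [coeff_cmap, coeff_map, Algebra.algebraMap_eq_smul_one, map_smul, h1, smul_eq_mul, mul_one]

lemma eval_cmap (φ : Ω →ₗ[L] L) (f : MvPolynomial σ Ω) (v : σ → L) :
    eval v (cmap φ f) = φ (eval (fun i => algebraMap L Ω (v i)) f) := by
  rw [cmap, map_sum, eval_eq, map_sum]
  refine Finset.sum_congr rfl fun m _ => ?_
  rw [eval_monomial, Finsupp.prod]
  have : ∏ i ∈ m.support, (algebraMap L Ω (v i)) ^ m i = algebraMap L Ω (∏ i ∈ m.support, v i ^ m i) := by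
    simp
  rw [this, mul_comm (coeff m f), ← Algebra.smul_def, map_smul, smul_eq_mul, mul_comm]

lemma cmap_rename {τ : Type*} (φ : Ω →ₗ[L] L) (J : τ → σ) (q : MvPolynomial τ Ω) :
    cmap φ (rename J q) = rename J (cmap φ q) := by
  classical
  induction q using MvPolynomial.induction_on' with
  | monomial m a =>
    have h : ∀ (ρ : Type _) (m : ρ →₀ ℕ) (a : Ω), cmap φ (monomial m a) = monomial m (φ a) := by
      intro ρ m a
      ext n
      rw [coeff_cmap, coeff_monomial, coeff_monomial]
      split_ifs <;> simp
    have h' : ∀ (m : σ →₀ ℕ) (a : Ω), cmap φ (monomial m a) = monomial m (φ a) := by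
      intro m a
      ext n
      rw [coeff_cmap, coeff_monomial, coeff_monomial]
      split_ifs <;> simp
    rw [rename_monomial, h', h, rename_monomial]
  | add p q hp hq => rw [map_add, cmap_add, cmap_add, map_add, hp, hq]

lemma cmap_sum_basis {ι : Type*} (B : Module.Basis ι L Ω) (f : MvPolynomial σ Ω) :
    ∃ S : Finset ι, f = ∑ i ∈ S, C (B i) * MvPolynomial.map (algebraMap L Ω) (cmap (B.coord i) f) := by
  classical
  refine ⟨f.support.biUnion (fun m => (B.repr (coeff m f)).support), ?_⟩
  ext m
  rw [coeff_sum]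
  simp only [coeff_C_mul, coeff_map, coeff_cmap, Module.Basis.coord_apply]
  conv_lhs => rw [← B.linearCombination_repr (coeff m f)]
  rw [Finsupp.linearCombination_apply, Finsupp.sum]
  by_cases hm : m ∈ f.support
  · apply Finset.sum_subset_zero_on_sdiff
    · exact Finset.subset_biUnion_of_mem (fun m => (B.repr (coeff m f)).support) hm
    · intro i hi
      rw [Finset.mem_sdiff] at hi
      rw [Finsupp.notMem_support_iff.mp hi.2]; simp
    · intro i _
      rw [Algebra.smul_def, mul_comm]
  · rw [notMem_support_iff.mp hm]; simp

lemma mem_bc_iff (P : Ideal (MvPolynomial σ L)) (f : MvPolynomial σ Ω) :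
    f ∈ P.map (MvPolynomial.map (algebraMap L Ω)) ↔ ∀ φ : Ω →ₗ[L] L, cmap φ f ∈ P := by
  constructor
  · intro hf φ
    rw [Ideal.map] at hf
    induction hf using Submodule.span_induction with
    | mem x hx =>
      obtain ⟨p, hp, rfl⟩ := hx
      rw [← one_mul (MvPolynomial.map (algebraMap L Ω) p), cmap_mul]
      exact P.mul_mem_left _ hp
    | zero => rw [cmap_zero]; exact zero_mem _
    | add x y _ _ hx hy => rw [cmap_add]; exact add_mem hx hy
    | smul a x hx ih =>
      clear ih
      revert φ
      induction hx using Submodule.span_induction generalizing a with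
      | mem x hx =>
        intro φ
        obtain ⟨p, hp, rfl⟩ := hx
        rw [smul_eq_mul, cmap_mul]
        exact P.mul_mem_left _ hp
      | zero => intro φ; rw [smul_zero, cmap_zero]; exact zero_mem _
      | add x y _ _ hx hy => intro φ; rw [smul_add, cmap_add]; exact add_mem (hx a φ) (hy a φ)
      | smul b x _ ih => intro φ; rw [smul_smul]; exact ih _ φ
  · intro h
    obtain ⟨S, hS⟩ := cmap_sum_basis (Module.Basis.ofVectorSpace L Ω) f
    rw [hS]
    exact Ideal.sum_mem _ fun i _ => Ideal.mul_mem_left _ _ (Ideal.mem_map_of_mem _ (h _))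

lemma exists_retr : ∃ φ : Ω →ₗ[L] L, φ 1 = 1 := by
  obtain ⟨g, hg⟩ := (Algebra.linearMap L Ω).exists_leftInverse_of_injective
    (LinearMap.ker_eq_bot.mpr (algebraMap L Ω).injective)
  refine ⟨g, ?_⟩
  have := LinearMap.congr_fun hg 1
  simpa using this

lemma comap_bc (P : Ideal (MvPolynomial σ L)) :
    (P.map (MvPolynomial.map (algebraMap L Ω))).comap (MvPolynomial.map (algebraMap L Ω)) = P := by
  apply le_antisymm
  · intro f hf
    rw [Ideal.mem_comap, mem_bc_iff] at hf
    obtain ⟨φ, hφ⟩ := exists_retr (L := L) (Ω := Ω)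
    rw [← cmap_map φ hφ f]
    exact hf φ
  · exact Ideal.le_comap_map

lemma exists_coord_ne {a : Ω} (ha : a ≠ 0) : ∃ φ : Ω →ₗ[L] L, φ a ≠ 0 := by
  by_contra h
  push Not at h
  exact ha ((Module.forall_dual_apply_eq_zero_iff L a).mp h)

/-- points -/
lemma exists_pt [IsAlgClosed L] [Finite σ] (P : Ideal (MvPolynomial σ L)) [P.IsPrime] (f : MvPolynomial σ L)
    (hf : f ∉ P) : ∃ v : σ → L, (∀ g ∈ P, eval v g = 0) ∧ eval v f ≠ 0 := by
  by_contra h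
  push Not at h
  apply hf
  have := vanishingIdeal_zeroLocus_eq_radical (k := L) (K := L) P
  rw [Ideal.IsPrime.radical ‹_›] at this
  rw [← this, mem_vanishingIdeal_iff]
  intro x hx
  have := h x (fun g hg => by simpa [aeval_eq_eval] using hx g hg)
  simpa [aeval_eq_eval] using this

lemma bc_prime [IsAlgClosed L] [Finite σ] (P : Ideal (MvPolynomial σ L)) [hP : P.IsPrime] :
    (P.map (MvPolynomial.map (algebraMap L Ω))).IsPrime := by
  have hv : ∀ v : σ → L, (∀ g ∈ P, eval v g = 0) → ∀ f ∈ P.map (MvPolynomial.map (algebraMap L Ω)),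
      eval (fun i => algebraMap L Ω (v i)) f = 0 := by
    intro v hv f hf
    by_contra h
    obtain ⟨φ, hφ⟩ := exists_coord_ne (L := L) h
    rw [← eval_cmap] at hφ
    exact hφ (hv _ ((mem_bc_iff P f).mp hf φ))
  constructor
  · intro htop
    obtain ⟨v, hv1, -⟩ := exists_pt P 1 (fun h => hP.ne_top ((Ideal.eq_top_iff_one _).mpr h))
    have := hv v hv1 1 (by rw [htop]; trivial)
    simp at this
  · intro f g hfg
    by_contra h
    push Not at h
    obtain ⟨hf, hg⟩ := h
    rw [mem_bc_iff] at hf hg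
    push Not at hf hg
    obtain ⟨φ, hφ⟩ := hf
    obtain ⟨ψ, hψ⟩ := hg
    obtain ⟨v, hv1, hv2⟩ := exists_pt P (cmap φ f * cmap ψ g) (fun h => (hP.mem_or_mem h).elim hφ hψ)
    rw [map_mul, eval_cmap, eval_cmap] at hv2
    have := hv v hv1 _ hfg
    rw [map_mul, mul_eq_zero] at this
    rcases this with h | h <;> simp [h] at hv2

lemma trdeg_bc_ge [IsAlgClosed L] [Finite σ] (P : Ideal (MvPolynomial σ L)) [hP : P.IsPrime] (n : ℕ)
    (hn : (n : Cardinal) ≤ Algebra.trdeg L (MvPolynomial σ L ⧸ P)) :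
    (n : Cardinal) ≤ Algebra.trdeg Ω (MvPolynomial σ Ω ⧸ P.map (MvPolynomial.map (algebraMap L Ω))) := by
  haveI := bc_prime (Ω := Ω) P
  obtain ⟨J, hJ⟩ := coord_indep P n hn
  apply trdeg_ge_of_coord _ n J
  intro q hq
  rw [mem_bc_iff] at hq
  ext m
  by_contra h
  obtain ⟨φ, hφ⟩ := exists_coord_ne (L := L) h
  apply hφ
  rw [← coeff_cmap, hJ (cmap φ q) (by rw [← cmap_rename]; exact hq φ), coeff_zero]

lemma trdeg_bc_le [Finite σ] (P : Ideal (MvPolynomial σ L)) [hP : P.IsPrime]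
    (P' : Ideal (MvPolynomial σ Ω)) [P'.IsPrime] (h : P.map (MvPolynomial.map (algebraMap L Ω)) ≤ P') (n : ℕ)
    (hn : (n : Cardinal) ≤ Algebra.trdeg Ω (MvPolynomial σ Ω ⧸ P')) :
    (n : Cardinal) ≤ Algebra.trdeg L (MvPolynomial σ L ⧸ P) := by
  obtain ⟨J, hJ⟩ := coord_indep P' n hn
  apply trdeg_ge_of_coord _ n J
  intro q hq
  apply map_injective (algebraMap L Ω) (algebraMap L Ω).injective
  rw [map_zero]
  apply hJ
  rw [← map_rename]
  exact h (Ideal.mem_map_of_mem _ hq)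

end bc

end part8

section part9
open MvPolynomial

section ultra
variable {I K Ω σ : Type*} [Field K] [Field Ω] [Algebra K Ω] {U : Ultrafilter I}
  {π0 : (I → K) →ₐ[K] Ω}

lemma ultra_algClosed [IsAlgClosed K] (hπs : Function.Surjective π0) : IsAlgClosed Ω := by
  apply IsAlgClosed.of_exists_root
  intro p hp hirr
  choose c hc using fun j => hπs (p.coeff j)
  have hd : p.natDegree ≠ 0 := by
    have := hirr.natDegree_pos
    omega
  have h1 : ∀ i : I, ∃ z : K, z ^ p.natDegree + ∑ j ∈ Finset.range p.natDegree, c j i * z ^ j = 0 := by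
    intro i
    let q : Polynomial K := Polynomial.X ^ p.natDegree + ∑ j ∈ Finset.range p.natDegree,
      Polynomial.C (c j i) * Polynomial.X ^ j
    have hq : q.degree = p.natDegree := by
      have hlt : (∑ j ∈ Finset.range p.natDegree,
         Polynomial.C (c j i) * Polynomial.X ^ j).degree < (p.natDegree : WithBot ℕ) := by
        refine lt_of_le_of_lt (Polynomial.degree_sum_le _ _) ?_
        rw [Finset.sup_lt_iff (WithBot.bot_lt_coe _)]
        intro j hj
        refine lt_of_le_of_lt (Polynomial.degree_C_mul_X_pow_le _ _) ?_
        exact_mod_cast Finset.mem_range.mp hj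
      rw [show q = _ from rfl, Polynomial.degree_add_eq_left_of_degree_lt]
      · simp
      · simpa using hlt
    obtain ⟨z, hz⟩ := IsAlgClosed.exists_root q (by rw [hq]; exact_mod_cast hd)
    refine ⟨z, ?_⟩
    have hz' : Polynomial.eval z q = 0 := hz
    simpa [q, Polynomial.eval_finsetSum] using hz'
  choose z hz using h1
  refine ⟨π0 z, ?_⟩
  rw [Polynomial.eval_eq_sum_range, Finset.sum_range_succ, hp.coeff_natDegree, one_mul, add_comm]
  have : z ^ p.natDegree + ∑ j ∈ Finset.range p.natDegree, c j * z ^ j = 0 := by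
    funext i
    simpa using hz i
  have h2 := congrArg π0 this
  rw [map_add, map_pow, map_sum, map_zero] at h2
  rw [← h2]
  congr 1
  refine Finset.sum_congr rfl fun j _ => ?_
  rw [map_mul, map_pow, hc]

/-- evaluation of a family at an index -/
noncomputable def evi (i : I) : MvPolynomial σ (I → K) →+* MvPolynomial σ K :=
  MvPolynomial.map (Pi.evalRingHom (fun _ => K) i)

lemma coeff_evi (i : I) (m : σ →₀ ℕ) (F : MvPolynomial σ (I → K)) : coeff m (evi i F) = coeff m F i := by
  rw [evi, coeff_map]; rfl

/-- passage to the ultraproduct -/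
noncomputable def ulm (π0 : (I → K) →ₐ[K] Ω) : MvPolynomial σ (I → K) →+* MvPolynomial σ Ω :=
  MvPolynomial.map (π0 : (I → K) →+* Ω)

lemma coeff_ulm (m : σ →₀ ℕ) (F : MvPolynomial σ (I → K)) : coeff m (ulm π0 F) = π0 (coeff m F) := by
  rw [ulm, coeff_map]; rfl

lemma ulm_surj (hπs : Function.Surjective π0) : Function.Surjective (ulm (σ := σ) π0) :=
  map_surjective _ hπs

lemma ulm_eq_zero (hπ0 : ∀ f, π0 f = 0 ↔ ∀ᶠ i in (U : Filter I), f i = 0) (F : MvPolynomial σ (I → K)) :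
    ulm π0 F = 0 ↔ ∀ᶠ i in (U : Filter I), evi i F = 0 := by
  constructor
  · intro h
    have h1 : ∀ᶠ i in (U : Filter I), ∀ m ∈ F.support, coeff m F i = 0 := by
      rw [Filter.eventually_all_finset]
      intro m _
      rw [← hπ0, ← coeff_ulm, h, coeff_zero]
    filter_upwards [h1] with i hi
    ext m
    rw [coeff_evi, coeff_zero]
    by_cases hm : m ∈ F.support
    · exact hi m hm
    · rw [notMem_support_iff.mp hm]; rfl
  · intro h
    ext m
    rw [coeff_ulm, coeff_zero, hπ0]
    filter_upwards [h] with i hi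
    rw [← coeff_evi, hi, coeff_zero]

/-- ultraproduct of ideals -/
noncomputable def ulIdeal (U : Ultrafilter I) (π0 : (I → K) →ₐ[K] Ω) (p : I → Ideal (MvPolynomial σ K)) :
    Ideal (MvPolynomial σ Ω) :=
  Ideal.map (ulm π0)
    { carrier := {F | ∀ᶠ i in (U : Filter I), evi i F ∈ p i}
      add_mem' := by
        intro a b ha hb
        filter_upwards [ha, hb] with i h1 h2
        rw [map_add]; exact add_mem h1 h2
      zero_mem' := Filter.Eventually.of_forall (fun i => by rw [map_zero]; exact zero_mem _)
      smul_mem' := by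
        intro c a ha
        filter_upwards [ha] with i h
        rw [smul_eq_mul, map_mul]; exact Ideal.mul_mem_left _ _ h }

lemma mem_ulIdeal (hπs : Function.Surjective π0)
    (hπ0 : ∀ f, π0 f = 0 ↔ ∀ᶠ i in (U : Filter I), f i = 0) (p : I → Ideal (MvPolynomial σ K))
    (F : MvPolynomial σ (I → K)) :
    ulm π0 F ∈ ulIdeal U π0 p ↔ ∀ᶠ i in (U : Filter I), evi i F ∈ p i := by
  rw [ulIdeal, Ideal.mem_map_iff_of_surjective _ (ulm_surj hπs)]
  constructor
  · rintro ⟨G, hG, hGF⟩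
    have : ulm π0 (G - F) = 0 := by rw [map_sub, hGF, sub_self]
    rw [ulm_eq_zero hπ0] at this
    have hG' : ∀ᶠ i in (U : Filter I), evi i G ∈ p i := hG
    filter_upwards [hG', this] with i h1 h2
    rw [map_sub, sub_eq_zero] at h2
    rwa [← h2]
  · intro h
    exact ⟨F, h, rfl⟩

lemma ulIdeal_prime (hπs : Function.Surjective π0)
    (hπ0 : ∀ f, π0 f = 0 ↔ ∀ᶠ i in (U : Filter I), f i = 0) (p : I → Ideal (MvPolynomial σ K))
    (hp : ∀ i, (p i).IsPrime) : (ulIdeal U π0 p).IsPrime := by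
  constructor
  · rw [Ideal.ne_top_iff_one, ← map_one (ulm π0), mem_ulIdeal hπs hπ0]
    intro h
    obtain ⟨i, hi⟩ := h.exists
    rw [map_one] at hi
    exact (hp i).ne_top ((Ideal.eq_top_iff_one _).mpr hi)
  · intro x y
    obtain ⟨F, rfl⟩ := ulm_surj hπs x
    obtain ⟨G, rfl⟩ := ulm_surj hπs y
    rw [← map_mul, mem_ulIdeal hπs hπ0, mem_ulIdeal hπs hπ0, mem_ulIdeal hπs hπ0, ← Ultrafilter.eventually_or]
    intro h
    filter_upwards [h] with i hi
    rw [map_mul] at hi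
    exact (hp i).mem_or_mem hi

lemma ultra_const {T : Type*} [Finite T] (J : I → T) : ∃ t, ∀ᶠ i in (U : Filter I), J i = t := by
  by_contra h
  push Not at h
  have := Filter.eventually_all.mpr h
  obtain ⟨i, hi⟩ := this.exists
  exact hi _ rfl

lemma eval_ulm (F : MvPolynomial σ (I → K)) (v : σ → I → K) :
    eval (fun s => π0 (v s)) (ulm π0 F) = π0 (fun i => eval (fun s => v s i) (evi i F)) := by
  have h1 : eval (fun s => π0 (v s)) (ulm π0 F) = π0 (eval v F) := by
    rw [ulm, eval_map]
    have := MvPolynomial.eval₂_comp (π0 : (I → K) →+* Ω) v F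
    exact this.symm
  rw [h1]
  congr 1
  funext i
  rw [evi, eval_map]
  exact MvPolynomial.eval₂_comp (Pi.evalRingHom (fun _ => K) i) v F

lemma rename_ulm {τ : Type*} (J : τ → σ) (F : MvPolynomial τ (I → K)) :
    rename J (ulm π0 F) = ulm π0 (rename J F) := (map_rename _ _ _).symm

lemma rename_evi {τ : Type*} (J : τ → σ) (i : I) (F : MvPolynomial τ (I → K)) :
    rename J (evi i F) = evi i (rename J F) := (map_rename _ _ _).symm

lemma ul_coord [Finite σ] (hπs : Function.Surjective π0)
    (hπ0 : ∀ f, π0 f = 0 ↔ ∀ᶠ i in (U : Filter I), f i = 0) (p : I → Ideal (MvPolynomial σ K))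
    (hp : ∀ i, (p i).IsPrime) (n : ℕ)
    (hn : ∀ i, (n : Cardinal) ≤ Algebra.trdeg K (MvPolynomial σ K ⧸ p i)) :
    (n : Cardinal) ≤ Algebra.trdeg Ω (MvPolynomial σ Ω ⧸ ulIdeal U π0 p) := by
  haveI := ulIdeal_prime hπs hπ0 p hp
  choose J hJ using fun i => (haveI := hp i; coord_indep (p i) n (hn i))
  obtain ⟨J0, hJ0⟩ := ultra_const (U := U) J
  apply trdeg_ge_of_coord _ n J0
  intro q hq
  obtain ⟨Q, rfl⟩ := ulm_surj hπs q
  rw [rename_ulm, mem_ulIdeal hπs hπ0] at hq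
  rw [ulm_eq_zero hπ0]
  filter_upwards [hq, hJ0] with i h1 h2
  apply hJ i
  rw [h2, rename_evi]; exact h1

end ultra

end part9

section part10
open MvPolynomial

section cut
variable {k σ : Type*} [Field k]

lemma not_all_X_mem [Finite σ] (Q : Ideal (MvPolynomial σ k)) [Q.IsPrime]
    (h : ((1 : ℕ) : Cardinal) ≤ Algebra.trdeg k (MvPolynomial σ k ⧸ Q)) (hX : ∀ c, X c ∈ Q) : False := by
  obtain ⟨J, hJ⟩ := coord_indep Q 1 h
  have := hJ (X 0) (by rw [rename_X]; exact hX _)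
  exact X_ne_zero _ this

/-- linear form -/
noncomputable def linf [Fintype σ] (w : σ → k) : MvPolynomial σ k := ∑ c, C (w c) * X c

lemma eval_linf [Fintype σ] (w v : σ → k) : eval v (linf w) = ∑ c, w c * v c := by
  simp [linf]

lemma linf_add [Fintype σ] (w v : σ → k) : linf (w + v) = linf w + linf v := by
  simp [linf, add_mul, Finset.sum_add_distrib]

lemma linf_smul [Fintype σ] (a : k) (w : σ → k) : linf (a • w) = C a * linf w := by
  simp [linf, Finset.mul_sum, mul_assoc]

lemma linf_homog [Fintype σ] (w : σ → k) : (linf w).IsHomogeneous 1 := by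
  apply IsHomogeneous.sum
  intro c _
  simpa using (isHomogeneous_C σ (w c)).mul (isHomogeneous_X k c)

lemma lin_cut [Fintype σ] [Infinite k] (N : ℕ) (I : Ideal (MvPolynomial σ k))
    (h : ∀ Q : Ideal (MvPolynomial σ k), Q.IsPrime → I ≤ Q →
      ¬ ((N + 1 : ℕ) : Cardinal) ≤ Algebra.trdeg k (MvPolynomial σ k ⧸ Q)) :
    ∃ l : Fin N → σ → k, ∀ Q : Ideal (MvPolynomial σ k), Q.IsPrime → I ≤ Q → (∀ t, linf (l t) ∈ Q) →
      ¬ ((1 : ℕ) : Cardinal) ≤ Algebra.trdeg k (MvPolynomial σ k ⧸ Q) := by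
  induction N generalizing I with
  | zero => exact ⟨Fin.elim0, fun Q hQ hI _ => by simpa using h Q hQ hI⟩
  | succ N ih =>
    let S : Set (Ideal (MvPolynomial σ k)) := {q ∈ I.minimalPrimes |
      ((1 : ℕ) : Cardinal) ≤ Algebra.trdeg k (MvPolynomial σ k ⧸ q)}
    have hS : S.Finite := (Ideal.finite_minimalPrimes_of_isNoetherianRing _ I).subset (fun q hq => hq.1)
    haveI : Finite S := hS
    let W : S → Submodule k (σ → k) := fun q =>
      { carrier := {w | linf w ∈ q.1}
        add_mem' := by intro a b ha hb; simp only [Set.mem_ofPred_eq] at *; rw [linf_add]; exact add_mem ha hb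
        zero_mem' := by simp [linf]
        smul_mem' := by
          intro c a ha; simp only [Set.mem_ofPred_eq] at *; rw [linf_smul]; exact Ideal.mul_mem_left _ _ ha }
    have hex : ∃ w : σ → k, ∀ q : S, linf w ∉ q.1 := by
      by_contra hcon
      push Not at hcon
      have hun : (⋃ q : S, (W q : Set (σ → k))) = Set.univ := by
        rw [Set.eq_univ_iff_forall]
        intro w
        obtain ⟨q, hq⟩ := hcon w
        exact Set.mem_iUnion.mpr ⟨q, hq⟩
      obtain ⟨q, hq⟩ := Subspace.exists_eq_top_of_iUnion_eq_univ hun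
      haveI : q.1.IsPrime := q.2.1.1.1
      apply not_all_X_mem q.1 q.2.2
      intro c
      classical
      have : (Pi.single c 1 : σ → k) ∈ W q := by rw [hq]; trivial
      have h2 : linf (Pi.single c 1 : σ → k) ∈ q.1 := this
      have h3 : linf (Pi.single c 1 : σ → k) = X c := by
        rw [linf, Finset.sum_eq_single c]
        · simp
        · intro b _ hb; simp [hb]
        · simp
      rwa [h3] at h2
    obtain ⟨w, hw⟩ := hex
    obtain ⟨l, hl⟩ := ih (I ⊔ Ideal.span {linf w}) (by
      intro Q hQ hIQ htr
      obtain ⟨q, hq, hqQ⟩ := Ideal.exists_minimalPrimes_le (le_sup_left.trans hIQ : I ≤ Q)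
      haveI : q.IsPrime := hq.1.1
      have h1 : ((1 : ℕ) : Cardinal) ≤ Algebra.trdeg k (MvPolynomial σ k ⧸ q) :=
        le_trans (le_trans (by exact_mod_cast (by omega : 1 ≤ N + 1)) htr) (trdeg_mono q Q hqQ)
      have hlin : linf w ∉ q := hw ⟨q, hq, h1⟩
      have hlQ : linf w ∈ Q := (le_sup_right.trans hIQ) (Ideal.subset_span rfl)
      have hlt : q < Q := lt_of_le_of_ne hqQ (by rintro rfl; exact hlin hlQ)
      exact h q hq.1.1 hq.1.2 (trdeg_drop q Q hlt _ htr))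
    refine ⟨Fin.cons w l, ?_⟩
    intro Q hQ hIQ hlQ
    apply hl Q hQ
    · rw [sup_le_iff]
      refine ⟨hIQ, ?_⟩
      rw [Ideal.span_singleton_le_iff_mem]
      simpa using hlQ 0
    · intro t
      simpa using hlQ t.succ

/-- line through the origin -/
noncomputable def lineHom (v : σ → k) : MvPolynomial σ k →ₐ[k] Polynomial k :=
  aeval (fun c => Polynomial.C (v c) * Polynomial.X)

lemma lineHom_homog (v : σ → k) (F : MvPolynomial σ k) (d : ℕ) (hF : F.IsHomogeneous d)
    (h0 : eval v F = 0) : lineHom v F = 0 := by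
  have : lineHom v F = Polynomial.C (eval v F) * Polynomial.X ^ d := by
    rw [lineHom, aeval_def, eval₂_eq, eval_eq, map_sum, Finset.sum_mul]
    refine Finset.sum_congr rfl fun m hm => ?_
    rw [Polynomial.algebraMap_eq, map_mul, mul_assoc, map_prod]
    congr 1
    have hdm : m.degree = d := by rw [← hF (mem_support_iff.mp hm), Finsupp.degree_eq_weight_one]; rfl
    rw [← hdm]
    simp only [mul_pow, Finset.prod_mul_distrib, map_pow]
    congr 1
    rw [Finsupp.degree_apply, Finset.prod_pow_eq_pow_sum]
  rw [this, h0]; simp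

lemma line_prime (v : σ → k) (hv : v ≠ 0) :
    (RingHom.ker (lineHom v)).IsPrime ∧
    ((1 : ℕ) : Cardinal) ≤ Algebra.trdeg k (MvPolynomial σ k ⧸ RingHom.ker (lineHom v)) := by
  haveI h1 : (RingHom.ker (lineHom v)).IsPrime := RingHom.ker_isPrime _
  haveI h2 : (RingHom.ker (eval (0 : σ → k))).IsPrime := RingHom.ker_isPrime _
  refine ⟨h1, ?_⟩
  obtain ⟨c, hc⟩ := Function.ne_iff.mp hv
  have hev : ∀ f, Polynomial.eval 0 (lineHom v f) = eval 0 f := by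
    intro f
    have : ((Polynomial.aeval (0 : k)).comp (lineHom v)) = aeval (0 : σ → k) := by
      ext c; simp [lineHom]
    have h3 := congrArg (fun g => g f) this
    simpa [Polynomial.aeval_def, Polynomial.eval₂_eq_eval_map, coe_aeval_eq_eval] using h3
  refine trdeg_drop (RingHom.ker (lineHom v)) (RingHom.ker (eval (0 : σ → k))) ?_ 0 (by simp)
  refine lt_of_le_of_ne ?_ ?_
  · intro f hf
    rw [RingHom.mem_ker] at *
    rw [← hev, hf]; simp
  · intro h
    have : (X c : MvPolynomial σ k) ∈ RingHom.ker (lineHom v) := by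
      rw [h, RingHom.mem_ker]; simp
    rw [RingHom.mem_ker] at this
    simp [lineHom] at this
    exact hc this

lemma lin_forms [Fintype σ] [Infinite k] {ι : Type*} (F : ι → MvPolynomial σ k) (d : ι → ℕ)
    (hF : ∀ j, (F j).IsHomogeneous (d j)) (N : ℕ)
    (h : ∀ Q : Ideal (MvPolynomial σ k), Q.IsPrime → Ideal.span (Set.range F) ≤ Q →
      ¬ ((N + 1 : ℕ) : Cardinal) ≤ Algebra.trdeg k (MvPolynomial σ k ⧸ Q)) :
    ∃ l : Fin N → σ → k, ∀ v, (∀ j, eval v (F j) = 0) → (∀ t, eval v (linf (l t)) = 0) → v = 0 := by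
  obtain ⟨l, hl⟩ := lin_cut N _ h
  refine ⟨l, ?_⟩
  intro v h1 h2
  by_contra hv
  obtain ⟨hp, ht⟩ := line_prime v hv
  refine hl _ hp ?_ ?_ ht
  · rw [Ideal.span_le]
    rintro _ ⟨j, rfl⟩
    exact lineHom_homog v _ _ (hF j) (h1 j)
  · intro t
    exact lineHom_homog v _ _ (linf_homog _) (h2 t)

lemma drop_many {R : Type*} [CommRing R] [Algebra k R] [Algebra.FiniteType k R] (e n : ℕ)
    (P M : Ideal R) [hP : P.IsPrime] [hM : M.IsPrime] (hPM : P ≤ M)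
    (l : Fin n → R) (hl : ∀ t, l t ∈ M) (h : ((e + n : ℕ) : Cardinal) ≤ Algebra.trdeg k (R ⧸ P)) :
    ∃ Q : Ideal R, Q.IsPrime ∧ P ≤ Q ∧ (∀ t, l t ∈ Q) ∧ (e : Cardinal) ≤ Algebra.trdeg k (R ⧸ Q) := by
  induction n generalizing P with
  | zero => exact ⟨P, hP, le_rfl, fun t => t.elim0, by simpa using h⟩
  | succ n ih =>
    obtain ⟨Q, hQ, hPQ, hQM, hf, htr⟩ := drop_alg (k := k) P M hPM (l 0) (hl 0)
    obtain ⟨Q', hQ', hQQ', hf', htr'⟩ := ih Q hQM (fun t => l t.succ) (fun t => hl _) (htr _ h)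
    refine ⟨Q', hQ', hPQ.trans hQQ', ?_, htr'⟩
    intro t
    refine Fin.cases (hQQ' hf) hf' t

lemma trdeg_bound [Fintype σ] [IsAlgClosed k] {ι : Type*} (F : ι → MvPolynomial σ k)
    (N : ℕ) (l : Fin N → σ → k)
    (hl : ∀ v, (∀ j, eval v (F j) = 0) → (∀ t, eval v (linf (l t)) = 0) → v = 0)
    (Q : Ideal (MvPolynomial σ k)) [hQ : Q.IsPrime] (hQ0 : ∀ f ∈ Q, eval 0 f = 0) (hFQ : ∀ j, F j ∈ Q) :
    ¬ ((N + 1 : ℕ) : Cardinal) ≤ Algebra.trdeg k (MvPolynomial σ k ⧸ Q) := by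
  intro h
  haveI h2 : (RingHom.ker (eval (0 : σ → k))).IsPrime := RingHom.ker_isPrime _
  obtain ⟨Q', hQ', hle, hlt, htr⟩ := drop_many (k := k) 1 N Q (RingHom.ker (eval (0 : σ → k)))
    (fun f hf => hQ0 f hf) (fun t => linf (l t)) (fun t => by rw [RingHom.mem_ker, eval_linf]; simp)
    (by rw [add_comm]; exact h)
  apply not_all_X_mem Q' htr
  intro c
  by_contra hc
  obtain ⟨v, hv, hvc⟩ := exists_pt Q' (X c) hc
  apply hvc
  rw [hl v (fun j => hv _ (hle (hFQ j))) (fun t => hv _ (hlt t))]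
  simp

end cut

end part10

section part11
open MvPolynomial

section coords
variable {k σ : Type*} [Field k] [Fintype σ]

lemma lin_coords (Λ : Submodule k (σ → k)) (n : ℕ) (hn : Module.finrank k Λ = n) :
    ∃ (J : Fin n → σ) (A : σ → Fin n → k), (∀ c, ∀ v ∈ Λ, v c = ∑ j, A c j * v (J j)) ∧
      (∀ e : Fin n → k, (∀ v ∈ Λ, ∑ j, e j * v (J j) = 0) → e = 0) := by
  classical
  let ε : σ → Module.Dual k Λ := fun c => (LinearMap.proj c).comp Λ.subtype
  have htop : Submodule.span k (Set.range ε) = ⊤ := by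
    rw [eq_top_iff]
    intro f _
    obtain ⟨g, hg⟩ := LinearMap.exists_extend f
    have : f = ∑ c, g (Pi.single c 1) • ε c := by
      rw [← hg]
      ext v
      simp only [LinearMap.comp_apply, LinearMap.sum_apply, LinearMap.smul_apply, ε]
      conv_lhs => rw [← LinearMap.sum_single_apply (fun _ => k) (Λ.subtype v)]
      rw [map_sum]
      refine Finset.sum_congr rfl fun c _ => ?_
      have : (Pi.single c (Λ.subtype v c) : σ → k) = (Λ.subtype v c) • Pi.single c 1 := by
        rw [← Pi.single_smul]; simp
      rw [this, map_smul]
      simp [mul_comm]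
    rw [this]
    exact Submodule.sum_mem _ fun c _ => Submodule.smul_mem _ _ (Submodule.subset_span ⟨c, rfl⟩)
  obtain ⟨κ, a, ha, hsp, hli⟩ := exists_linearIndependent' k ε
  haveI : Finite κ := Finite.of_injective a ha
  haveI := Fintype.ofFinite κ
  have hcard : Fintype.card κ = n := by
    have := finrank_span_eq_card hli
    rw [hsp, htop, finrank_top, Subspace.dual_finrank_eq, hn] at this
    exact this.symm
  let e := (Fintype.equivFinOfCardEq hcard).symm
  have hli' : LinearIndependent k (fun j => ε (a (e j))) := hli.comp e e.injective
  have hsp' : ∀ c, ε c ∈ Submodule.span k (Set.range (fun j => ε (a (e j)))) := by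
    intro c
    have : Set.range (fun j => ε (a (e j))) = Set.range (ε ∘ a) := by
      rw [← e.surjective.range_comp]; rfl
    rw [this, hsp]
    exact Submodule.subset_span ⟨c, rfl⟩
  choose A hA using fun c => (Submodule.mem_span_range_iff_exists_fun k).mp (hsp' c)
  refine ⟨fun j => a (e j), A, ?_, ?_⟩
  · intro c v hv
    have := congrArg (fun f => f ⟨v, hv⟩) (hA c)
    simpa [ε, LinearMap.sum_apply] using this.symm
  · intro w hw
    have := Fintype.linearIndependent_iff.mp hli' w (by
      ext v
      have := hw v.1 v.2
      simpa [ε, LinearMap.sum_apply] using this)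
    funext j; exact this j

end coords

section pack
variable {I K Ω σ : Type*} [Field K] [Field Ω] [Algebra K Ω] {U : Ultrafilter I}
  {π0 : (I → K) →ₐ[K] Ω}

lemma lift_homog [Fintype σ] (d : ℕ) (G : I → MvPolynomial σ K) (hG : ∀ i, (G i).IsHomogeneous d) :
    ∃ F : MvPolynomial σ (I → K), (∀ i, evi i F = G i) ∧ (∀ m, coeff m F = fun i => coeff m (G i)) ∧
      F.IsHomogeneous d := by
  classical
  let F : MvPolynomial σ (I → K) := ∑ m ∈ Finset.finsuppAntidiag (Finset.univ : Finset σ) d,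
    monomial m (fun i => coeff m (G i))
  have hdeg : ∀ m : σ →₀ ℕ, m ∈ Finset.finsuppAntidiag (Finset.univ : Finset σ) d ↔ m.degree = d := by
    intro m
    rw [Finset.mem_finsuppAntidiag, Finsupp.degree_eq_sum]
    simp
  have hc : ∀ m, coeff m F = fun i => coeff m (G i) := by
    intro m
    simp only [F, coeff_sum, coeff_monomial]
    rw [Finset.sum_ite_eq']
    split_ifs with h
    · rfl
    · funext i
      rw [hdeg] at h
      exact ((hG i).coeff_eq_zero h).symm
  refine ⟨F, ?_, hc, ?_⟩
  · intro i; ext m; rw [coeff_evi, hc]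
  · apply IsHomogeneous.sum
    intro m hm
    exact isHomogeneous_monomial _ ((hdeg m).mp hm)

lemma linf_ul [Fintype σ] (l : I → σ → K) (v : σ → I → K) :
    eval (fun s => π0 (v s)) (linf (fun c => π0 (fun i => l i c))) =
      π0 (fun i => eval (fun s => v s i) (linf (l i))) := by
  simp only [eval_linf]
  simp only [← map_mul]
  rw [← map_sum]
  congr 1
  funext i
  simp

theorem ultra_package [Fintype σ] [IsAlgClosed K] (hπs : Function.Surjective π0)
    (hπ0 : ∀ f, π0 f = 0 ↔ ∀ᶠ i in (U : Filter I), f i = 0)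
    {k m b : ℕ} (d : Fin k → ℕ) (G : I → Fin k → MvPolynomial σ K)
    (hG : ∀ i j, (G i j).IsHomogeneous (d j))
    (p : I → Ideal (MvPolynomial σ K)) (hp : ∀ i, (p i).IsPrime)
    (hGp : ∀ i j, G i j ∈ p i)
    (hp0 : ∀ i, ∀ f ∈ p i, eval 0 f = 0)
    (hpt : ∀ i, ((m + 1 : ℕ) : Cardinal) ≤ Algebra.trdeg K (MvPolynomial σ K ⧸ p i))
    (Λ : I → Submodule K (σ → K)) (hΛ : ∀ i, Module.finrank K (Λ i) = b + 1)
    (hpΛ : ∀ i, ∀ f : MvPolynomial σ K, f.IsHomogeneous 1 → (f ∈ p i ↔ ∀ v ∈ Λ i, eval v f = 0))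
    (S : Set (Fin k))
    (hS : ∀ i, ∀ Q : Ideal (MvPolynomial σ K), Q.IsPrime →
      Ideal.span (Set.range fun j : S => G i j) ≤ Q →
      ¬ ((m + 1 + 1 : ℕ) : Cardinal) ≤ Algebra.trdeg K (MvPolynomial σ K ⧸ Q)) :
    ∃ (F : Fin k → MvPolynomial σ Ω) (P : Ideal (MvPolynomial σ Ω)) (J : Fin (b + 1) → σ)
      (A : σ → Fin (b + 1) → Ω), P.IsPrime ∧ (∀ j, F j ∈ P) ∧ (∀ j, (F j).IsHomogeneous (d j)) ∧
      (∀ j n, coeff n (F j) = π0 (fun i => coeff n (G i j))) ∧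
      (((m + 1 : ℕ) : Cardinal) ≤ Algebra.trdeg Ω (MvPolynomial σ Ω ⧸ P)) ∧
      (∀ c, X c - ∑ j, C (A c j) * X (J j) ∈ P) ∧
      (∀ e : Fin (b + 1) → Ω, ∑ j, C (e j) * X (J j) ∈ P → e = 0) ∧
      (∀ Q : Ideal (MvPolynomial σ Ω), Q.IsPrime → Q ≤ P → (∀ j ∈ S, F j ∈ Q) →
        ¬ ((m + 1 + 1 : ℕ) : Cardinal) ≤ Algebra.trdeg Ω (MvPolynomial σ Ω ⧸ Q)) := by
  classical
  haveI := ultra_algClosed hπs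
  haveI : Infinite K := IsAlgClosed.instInfinite
  choose F0 hF0 hF0c hF0h using fun j => lift_homog (d j) (fun i => G i j) (fun i => hG i j)
  choose J0 A0 hJA hJi using fun i => lin_coords (Λ i) _ (hΛ i)
  obtain ⟨J, hJ⟩ := ultra_const (U := U) J0
  choose l hl using fun i => lin_forms (fun j : S => G i j) (fun j => d j) (fun j => hG i j) (m + 1) (hS i)
  have hPr := ulIdeal_prime hπs hπ0 p hp
  have hcoef : ∀ j n, coeff n (ulm π0 (F0 j)) = π0 (fun i => coeff n (G i j)) := by
    intro j n; rw [coeff_ulm, hF0c]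
  refine ⟨fun j => ulm π0 (F0 j), ulIdeal U π0 p, J, fun c j => π0 (fun i => A0 i c j), hPr,
    ?_, ?_, hcoef, ul_coord hπs hπ0 p hp _ hpt, ?_, ?_, ?_⟩
  · intro j
    rw [mem_ulIdeal hπs hπ0]
    exact Filter.Eventually.of_forall fun i => by rw [hF0]; exact hGp i j
  · intro j
    exact (hF0h j).map _
  · intro c
    have : X c - ∑ j, C (π0 (fun i => A0 i c j)) * X (J j) =
        ulm π0 (X c - ∑ j, C (fun i => A0 i c j) * X (J j)) := by
      simp [ulm]
    rw [this, mem_ulIdeal hπs hπ0]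
    filter_upwards [hJ] with i hi
    have h2 : evi i (X c - ∑ j, C (fun i => A0 i c j) * X (J j)) = X c - ∑ j, C (A0 i c j) * X (J j) := by
      simp [evi]
    rw [h2, hpΛ i]
    · intro v hv
      have := hJA i c v hv
      simp only [map_sub, map_sum, map_mul, eval_X, eval_C]
      rw [← hi, this, sub_self]
    · apply IsHomogeneous.sub (isHomogeneous_X _ _)
      apply IsHomogeneous.sum
      intro j _
      simpa using (isHomogeneous_C σ (A0 i c j)).mul (isHomogeneous_X K (J j))
  · intro e he
    choose e0 he0 using fun j => hπs (e j)
    have : ∑ j, C (e j) * X (J j) = ulm π0 (∑ j, C (e0 j) * X (J j)) := by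
      simp [ulm, he0]
    rw [this, mem_ulIdeal hπs hπ0] at he
    funext j
    rw [← he0, Pi.zero_apply, hπ0]
    filter_upwards [hJ, he] with i hi h1
    have h2 : evi i (∑ j, C (e0 j) * X (J j)) = ∑ j, C (e0 j i) * X (J j) := by
      simp [evi]
    rw [h2, hpΛ i] at h1
    · have := hJi i (fun j => e0 j i) (by
        intro v hv
        have := h1 v hv
        rw [← hi] at this
        simpa using this)
      exact congrFun this j
    · apply IsHomogeneous.sum
      intro j _
      simpa using (isHomogeneous_C σ (e0 j i)).mul (isHomogeneous_X K (J j))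
  · intro Q hQ hQP hFQ
    refine trdeg_bound (fun j : S => ulm π0 (F0 j)) (m + 1) (fun t c => π0 (fun i => l i t c)) ?_ Q ?_
      (fun j => hFQ j j.2)
    · intro v hv1 hv2
      choose v0 hv0 using fun c => hπs (v c)
      obtain rfl : (fun c => π0 (v0 c)) = v := funext hv0
      have e1 : ∀ᶠ i in (U : Filter I), ∀ j : S, eval (fun s => v0 s i) (G i j) = 0 := by
        rw [Filter.eventually_all]
        intro j
        have := hv1 j
        rw [eval_ulm, hπ0] at this
        filter_upwards [this] with i hi
        rwa [hF0] at hi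
      have e2 : ∀ᶠ i in (U : Filter I), ∀ t, eval (fun s => v0 s i) (linf (l i t)) = 0 := by
        rw [Filter.eventually_all]
        intro t
        have := hv2 t
        rwa [linf_ul (fun i => l i t), hπ0] at this
      funext c
      rw [Pi.zero_apply, hπ0]
      filter_upwards [e1, e2] with i h1 h2
      exact congrFun (hl i _ h1 h2) c
    · intro f hf
      have hf := hQP hf
      obtain ⟨f0, rfl⟩ := ulm_surj hπs f
      rw [mem_ulIdeal hπs hπ0] at hf
      have : (0 : σ → Ω) = fun s => π0 ((0 : σ → I → K) s) := by funext s; simp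
      rw [this, eval_ulm, hπ0]
      filter_upwards [hf] with i hi
      exact hp0 i _ hi
end pack

end part11

section part12
open MvPolynomial

section ACl
variable {K Ω : Type*} [Field K] [Field Ω] [Algebra K Ω]

/-- the algebraic closure of `K(T)` in `Ω` -/
noncomputable def ACl (K : Type*) {Ω : Type*} [Field K] [Field Ω] [Algebra K Ω] (T : Set Ω) : IntermediateField K Ω :=
  (algebraicClosure (IntermediateField.adjoin K T) Ω).restrictScalars K

lemma mem_ACl (T : Set Ω) (x : Ω) : x ∈ ACl K T ↔ IsAlgebraic (IntermediateField.adjoin K T) x := by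
  rw [ACl, IntermediateField.mem_restrictScalars, mem_algebraicClosure_iff]

lemma subset_ACl (T : Set Ω) (x : Ω) (hx : x ∈ T) : x ∈ ACl K T := by
  rw [mem_ACl]
  exact isAlgebraic_algebraMap (⟨x, IntermediateField.subset_adjoin K T hx⟩ : IntermediateField.adjoin K T)

lemma ACl_mono (T T' : Set Ω) (h : T ⊆ T') : ACl K T ≤ ACl K T' := by
  intro x hx
  rw [mem_ACl] at *
  have hle := IntermediateField.adjoin.mono K T T' h
  letI : Algebra (IntermediateField.adjoin K T) (IntermediateField.adjoin K T') :=
    (IntermediateField.inclusion hle).toRingHom.toAlgebra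
  haveI : IsScalarTower (IntermediateField.adjoin K T) (IntermediateField.adjoin K T') Ω :=
    IsScalarTower.of_algebraMap_eq (fun x => rfl)
  exact hx.tower_top _

instance ACl_algClosed [IsAlgClosed Ω] (T : Set Ω) : IsAlgClosed (ACl K T) := by
  have : IsAlgClosed (algebraicClosure (IntermediateField.adjoin K T) Ω) :=
    (algebraicClosure.isAlgClosure (IntermediateField.adjoin K T) Ω).isAlgClosed
  exact this

lemma ACl_trdeg (T : Finset Ω) (n : ℕ) (x : Fin n → ACl K (T : Set Ω)) (hx : AlgebraicIndependent K x) :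
    n ≤ T.card := by
  have h1 : AlgebraicIndependent K (fun j => (x j : Ω)) :=
    hx.map' (f := (ACl K (T : Set Ω)).val) Subtype.val_injective
  have hT : ∀ j, (x j : Ω) ∈ (AlgebraicIndependent.matroid K Ω).closure (T : Set Ω) := by
    intro j
    rw [AlgebraicIndependent.matroid_closure_eq]
    have := (mem_ACl _ _).mp (x j).2
    rw [IntermediateField.isAlgebraic_adjoin_iff] at this
    exact this
  have h2 : (AlgebraicIndependent.matroid K Ω).Indep (Set.range fun j => (x j : Ω)) := by
    rw [AlgebraicIndependent.matroid_indep_iff]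
    exact h1.coe_range
  have h3 := h2.eRk_eq_encard
  have h4 := (AlgebraicIndependent.matroid K Ω).eRk_mono
    (show (Set.range fun j => (x j : Ω)) ⊆ _ from Set.range_subset_iff.mpr hT)
  rw [Matroid.eRk_closure_eq, h3] at h4
  have h5 := h4.trans ((AlgebraicIndependent.matroid K Ω).eRk_le_encard _)
  rw [Set.encard_coe_eq_coe_finsetCard, ← Set.image_univ,
    Function.Injective.encard_image h1.injective, Set.encard_univ] at h5
  simpa using h5
end ACl

end part12

section part13
open MvPolynomial

section steps

lemma finrank_homog (k : Type*) [Field k] (r d : ℕ) :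
    Module.finrank k (homogeneousSubmodule (Fin (r + 1)) k d) = (r + d).choose d := by
  classical
  rw [homogeneousSubmodule_eq_finsupp_supported]
  have hset : {m : Fin (r + 1) →₀ ℕ | m.degree = d} =
      ((Finset.finsuppAntidiag (Finset.univ : Finset (Fin (r + 1))) d : Finset _) : Set _) := by
    ext m
    simp [Finset.mem_finsuppAntidiag, Finsupp.degree_eq_sum]
  rw [hset, (AddMonoidAlgebra.supportedEquivFinsupp _).finrank_eq, Module.finrank_finsupp_self]
  have hc : ∀ s : Finset (Fin (r + 1) →₀ ℕ), Nat.card ((s : Set (Fin (r + 1) →₀ ℕ)) : Type _) = s.card := by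
    intro s; simp
  rw [← Nat.card_eq_fintype_card, hc, Finset.card_finsuppAntidiag_nat_eq_choose]
  simp only [Finset.card_univ, Fintype.card_fin]
  congr 1; omega

variable {L Ω : Type*} [Field L] [Field Ω] [Algebra L Ω] {σ : Type*}

/-- `Q` is defined over `L` -/
def defd (L : Type*) {Ω σ : Type*} [Field L] [Field Ω] [Algebra L Ω] (Q : Ideal (MvPolynomial σ Ω)) : Prop :=
  (Q.comap (MvPolynomial.map (algebraMap L Ω))).map (MvPolynomial.map (algebraMap L Ω)) = Q

lemma mem_range_map_of_coeff (L : Type*) {Ω σ : Type*} [Field L] [Field Ω] [Algebra L Ω] (f : MvPolynomial σ Ω)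
    (h : ∀ m, ∃ a : L, coeff m f = algebraMap L Ω a) :
    ∃ g : MvPolynomial σ L, MvPolynomial.map (algebraMap L Ω) g = f := by
  have : f ∈ Set.range (MvPolynomial.map (σ := σ) (algebraMap L Ω)) := by
    rw [mem_range_map_iff_coeffs_subset]
    intro x hx
    rw [Finset.mem_coe, mem_coeffs_iff] at hx
    obtain ⟨m, _, rfl⟩ := hx
    obtain ⟨a, ha⟩ := h m
    exact ⟨a, ha.symm⟩
  exact this

lemma defd_of_span (Q : Ideal (MvPolynomial σ Ω)) (S : Set (MvPolynomial σ Ω)) (hQ : Q = Ideal.span S)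
    (hS : ∀ f ∈ S, ∀ m, ∃ a : L, coeff m f = algebraMap L Ω a) : defd L Q := by
  apply le_antisymm Ideal.map_comap_le
  conv_lhs => rw [hQ]
  rw [Ideal.span_le]
  intro f hf
  obtain ⟨g, rfl⟩ := mem_range_map_of_coeff L f (hS f hf)
  apply Ideal.mem_map_of_mem
  rw [Ideal.mem_comap, hQ]
  exact Ideal.subset_span hf

lemma defd_mono {L' : Type*} [Field L'] [Algebra L' Ω] (Q : Ideal (MvPolynomial σ Ω)) (h : defd L Q)
    (hL : ∀ a : L, ∃ a' : L', algebraMap L Ω a = algebraMap L' Ω a') : defd L' Q := by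
  refine defd_of_span Q (MvPolynomial.map (algebraMap L Ω) '' (Q.comap (MvPolynomial.map (algebraMap L Ω)))) ?_ ?_
  · conv_lhs => rw [← h]
    rfl
  · rintro _ ⟨g, _, rfl⟩ m
    rw [coeff_map]
    exact hL _

lemma trdeg_defd [IsAlgClosed L] [Finite σ] (Q : Ideal (MvPolynomial σ Ω)) [Q.IsPrime] (h : defd L Q) (n : ℕ) :
    (n : Cardinal) ≤ Algebra.trdeg L (MvPolynomial σ L ⧸ Q.comap (MvPolynomial.map (algebraMap L Ω))) ↔
    (n : Cardinal) ≤ Algebra.trdeg Ω (MvPolynomial σ Ω ⧸ Q) := by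
  haveI : (Q.comap (MvPolynomial.map (algebraMap L Ω))).IsPrime := Ideal.comap_isPrime _ _
  constructor
  · intro h1
    have := trdeg_bc_ge (Ω := Ω) _ n h1
    unfold defd at h
    rwa [h] at this
  · intro h1
    exact trdeg_bc_le _ Q h.le n h1

lemma card_eq_of_nat (c : Cardinal) (n : ℕ) (h : ∀ m : ℕ, (m : Cardinal) ≤ c ↔ m ≤ n) : c = n := by
  apply le_antisymm
  · by_contra hc
    push Not at hc
    have : ((n + 1 : ℕ) : Cardinal) ≤ c := by
      rw [Nat.cast_succ]
      rw [← Cardinal.succ_natCast]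
      exact Order.succ_le_of_lt hc
    have := (h _).mp this
    omega
  · exact (h n).mpr le_rfl

lemma stepA [IsAlgClosed L] {r : ℕ} (Q : Ideal (MvPolynomial (Fin (r + 1)) Ω)) [Q.IsPrime]
    (hdef : defd L Q) (b n : ℕ) (J : Fin (b + 1) → Fin (r + 1))
    (hJ : ∀ e : Fin (b + 1) → Ω, ∑ j, C (e j) * X (J j) ∈ Q → e = 0)
    (htr : Algebra.trdeg Ω (MvPolynomial (Fin (r + 1)) Ω ⧸ Q) = ((n + 1 : ℕ) : Cardinal))
    (F : MvPolynomial (Fin (r + 1)) Ω) (d : ℕ) (hF : F.IsHomogeneous d) (hFQ : F ∈ Q) :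
    ∃ (w : ℕ) (τ : Fin w → Ω), w + HH b n d ≤ (r + d).choose d ∧
      ∀ m, ∃ e : Fin w → L, coeff m F = ∑ l, algebraMap L Ω (e l) * τ l := by
  classical
  let Q0 := Q.comap (MvPolynomial.map (σ := Fin (r + 1)) (algebraMap L Ω))
  haveI hQ0p : Q0.IsPrime := Ideal.comap_isPrime _ _
  have htr0 : Algebra.trdeg L (MvPolynomial (Fin (r + 1)) L ⧸ Q0) = ((n + 1 : ℕ) : Cardinal) := by
    apply card_eq_of_nat
    intro m
    rw [trdeg_defd Q hdef, htr, Nat.cast_le]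
  obtain ⟨J', -, hJ'⟩ := coord_tb Q0 (n + 1) htr0
  have hJ0 : ∀ c : Fin (b + 1) → L, ∑ j, C (c j) * X (J j) ∈ Q0 → c = 0 := by
    intro c hc
    have h1 : MvPolynomial.map (algebraMap L Ω) (∑ j, C (c j) * X (J j)) ∈ Q := hc
    simp only [map_sum, map_mul, map_C, map_X] at h1
    have := hJ (fun j => algebraMap L Ω (c j)) h1
    funext j
    have := congrFun this j
    simpa using this
  have hHB := hilbert_bound Q0 b n J hJ0 J' hJ' d
  let V := homogeneousSubmodule (Fin (r + 1)) L d
  haveI : Module.Finite L V := Module.Finite.iff_fg.mpr (homogeneousSubmodule_fg _ _ _)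
  let f : V →ₗ[L] (MvPolynomial (Fin (r + 1)) L ⧸ Q0) := (Ideal.Quotient.mkₐ L Q0).toLinearMap.domRestrict V
  have hrange : LinearMap.range f = V.map (Ideal.Quotient.mkₐ L Q0).toLinearMap := by
    rw [LinearMap.range_domRestrict]
  have hrn := LinearMap.finrank_range_add_finrank_ker f
  rw [hrange, finrank_homog] at hrn
  let W := LinearMap.ker f
  haveI : Module.Free L W := Module.Free.of_divisionRing L W
  let B := Module.finBasis L W
  have hW : ∀ g : MvPolynomial (Fin (r + 1)) L, g.IsHomogeneous d → g ∈ Q0 →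
      ∃ e : Fin (Module.finrank L W) → L, g = ∑ l, e l • ((B l : V) : MvPolynomial (Fin (r + 1)) L) := by
    intro g hg hgQ
    have hgW : (⟨g, hg⟩ : V) ∈ W := by
      rw [LinearMap.mem_ker]
      exact Ideal.Quotient.eq_zero_iff_mem.mpr hgQ
    refine ⟨fun l => B.repr ⟨⟨g, hg⟩, hgW⟩ l, ?_⟩
    have := B.sum_repr ⟨⟨g, hg⟩, hgW⟩
    have h2 := congrArg (fun z : W => ((z : V) : MvPolynomial (Fin (r + 1)) L)) this
    simp only [Submodule.coe_sum, Submodule.coe_smul] at h2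
    exact h2.symm
  have hFdef : F ∈ Q0.map (MvPolynomial.map (algebraMap L Ω)) := by
    have : Q0.map (MvPolynomial.map (algebraMap L Ω)) = Q := hdef
    rw [this]; exact hFQ
  obtain ⟨S, hS⟩ := cmap_sum_basis (Module.Basis.ofVectorSpace L Ω) F
  have hcm : ∀ φ : Ω →ₗ[L] L, (cmap φ F).IsHomogeneous d := by
    intro φ m hm
    rw [coeff_cmap] at hm
    apply hF
    intro h0; rw [h0] at hm; simp at hm
  choose e he using fun i => hW (cmap ((Module.Basis.ofVectorSpace L Ω).coord i) F) (hcm _)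
    ((mem_bc_iff _ _).mp hFdef _)
  refine ⟨Module.finrank L W, fun l => ∑ i ∈ S, (Module.Basis.ofVectorSpace L Ω) i * algebraMap L Ω (e i l), ?_, ?_⟩
  · have : Module.finrank L W + HH b n d ≤ Module.finrank L W + _ := Nat.add_le_add_left hHB _
    refine this.trans ?_
    rw [add_comm]; exact hrn.le
  · intro m
    refine ⟨fun l => coeff m ((B l : V) : MvPolynomial (Fin (r + 1)) L), ?_⟩
    conv_lhs => rw [hS]
    simp only [coeff_sum, coeff_C_mul, coeff_map]
    simp only [Finset.mul_sum]
    rw [Finset.sum_comm]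
    refine Finset.sum_congr rfl fun i _ => ?_
    conv_lhs => rw [he i]
    rw [coeff_sum, map_sum, Finset.mul_sum]
    refine Finset.sum_congr rfl fun l _ => ?_
    rw [coeff_smul, smul_eq_mul, map_mul]; ring

lemma stepB [IsAlgClosed L] [Finite σ] (Q P : Ideal (MvPolynomial σ Ω)) [hQ : Q.IsPrime] [hP : P.IsPrime]
    (hQP : Q ≤ P) (hdef : defd L Q) (n : ℕ)
    (htr : Algebra.trdeg Ω (MvPolynomial σ Ω ⧸ Q) = ((n + 1 : ℕ) : Cardinal))
    (F : MvPolynomial σ Ω) (hFP : F ∈ P) (hFQ : F ∉ Q) (hF : ∀ m, ∃ a : L, coeff m F = algebraMap L Ω a) :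
    ∃ Q' : Ideal (MvPolynomial σ Ω), Q'.IsPrime ∧ Q ≤ Q' ∧ Q' ≤ P ∧ F ∈ Q' ∧ defd L Q' ∧
      Algebra.trdeg Ω (MvPolynomial σ Ω ⧸ Q') = (n : Cardinal) := by
  obtain ⟨F0, rfl⟩ := mem_range_map_of_coeff L F hF
  let Q0 := Q.comap (MvPolynomial.map (σ := σ) (algebraMap L Ω))
  let P0 := P.comap (MvPolynomial.map (σ := σ) (algebraMap L Ω))
  haveI hQ0p : Q0.IsPrime := Ideal.comap_isPrime _ _
  haveI hP0p : P0.IsPrime := Ideal.comap_isPrime _ _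
  obtain ⟨R, hR, hQR, hRP, hFR, hRt⟩ := drop_alg (k := L) Q0 P0 (Ideal.comap_mono hQP) F0 hFP
  haveI hR' := bc_prime (Ω := Ω) R
  have hle : Q ≤ R.map (MvPolynomial.map (algebraMap L Ω)) := by
    conv_lhs => rw [← hdef]
    exact Ideal.map_mono hQR
  have hmem : MvPolynomial.map (algebraMap L Ω) F0 ∈ R.map (MvPolynomial.map (algebraMap L Ω)) :=
    Ideal.mem_map_of_mem _ hFR
  refine ⟨R.map (MvPolynomial.map (algebraMap L Ω)), hR', hle, ?_, hmem, ?_, ?_⟩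
  · rw [Ideal.map_le_iff_le_comap]; exact hRP
  · unfold defd; rw [comap_bc]
  · apply card_eq_of_nat
    intro m
    constructor
    · intro hm
      have hlt : Q < R.map (MvPolynomial.map (algebraMap L Ω)) :=
        lt_of_le_of_ne hle (by intro h; rw [← h] at hmem; exact hFQ hmem)
      have := trdeg_drop (k := Ω) Q _ hlt m hm
      rw [htr, Nat.cast_le] at this
      omega
    · intro hm
      refine trdeg_bc_ge R m ?_
      apply hRt
      rw [trdeg_defd Q hdef, htr, Nat.cast_le]
      omega

end steps

end part13

section part14
open MvPolynomial

section start
variable {K Ω : Type*} [Field K] [Field Ω] [Algebra K Ω]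

lemma start_lemma {r b : ℕ} (P : Ideal (MvPolynomial (Fin (r + 1)) Ω))
    (J : Fin (b + 1) → Fin (r + 1)) (A : Fin (r + 1) → Fin (b + 1) → Ω)
    (hA : ∀ c, X c - ∑ j, C (A c j) * X (J j) ∈ P)
    (hJ : ∀ e : Fin (b + 1) → Ω, ∑ j, C (e j) * X (J j) ∈ P → e = 0) :
    ∃ (T : Finset Ω) (Q : Ideal (MvPolynomial (Fin (r + 1)) Ω)), T.card ≤ (r - b) * (b + 1) ∧ Q.IsPrime ∧ Q ≤ P ∧
      defd (ACl K (T : Set Ω)) Q ∧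
      Algebra.trdeg Ω (MvPolynomial (Fin (r + 1)) Ω ⧸ Q) = ((b + 1 : ℕ) : Cardinal) := by
  classical
  have hδ : ∀ i j, A (J i) j = if i = j then 1 else 0 := by
    intro i j
    have h1 := hA (J i)
    have h2 : (X (J i) - ∑ j, C (A (J i) j) * X (J j) : MvPolynomial (Fin (r + 1)) Ω) =
        ∑ j, C ((if i = j then 1 else 0) - A (J i) j) * X (J j) := by
      simp only [C_sub, sub_mul, Finset.sum_sub_distrib]
      congr 1
      rw [Finset.sum_eq_single i]
      · simp
      · intro j _ hj; simp [Ne.symm hj]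
      · simp
    rw [h2] at h1
    have := congrFun (hJ _ h1) j
    simp only [Pi.zero_apply, sub_eq_zero] at this
    exact this.symm
  have hJinj : Function.Injective J := by
    intro i j hij
    have h1 := hδ i j
    rw [hij, hδ j j] at h1
    by_contra h
    simp [h] at h1
  let φ : MvPolynomial (Fin (r + 1)) Ω →ₐ[Ω] MvPolynomial (Fin (b + 1)) Ω :=
    aeval (fun c => ∑ j, C (A c j) * X j)
  have hφJ : ∀ j, φ (X (J j)) = X j := by
    intro j
    simp only [φ, aeval_X, hδ]
    rw [Finset.sum_eq_single j]
    · simp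
    · intro i _ hi; simp [Ne.symm hi]
    · simp
  let S : Set (MvPolynomial (Fin (r + 1)) Ω) := Set.range fun c => X c - ∑ j, C (A c j) * X (J j)
  have hC : ∀ a, φ (C a) = C a := fun a => by simp [φ]
  have hSφ : ∀ f, f - rename J (φ f) ∈ Ideal.span S := by
    intro f
    have : (Ideal.Quotient.mkₐ Ω (Ideal.span S)) =
        ((Ideal.Quotient.mkₐ Ω (Ideal.span S)).comp (rename J)).comp φ := by
      apply algHom_ext
      intro c
      simp only [AlgHom.comp_apply]
      rw [← sub_eq_zero, ← map_sub]
      apply Ideal.Quotient.eq_zero_iff_mem.mpr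
      apply Ideal.subset_span
      refine ⟨c, ?_⟩
      simp [φ]
    have h2 := congrArg (fun g => g f) this
    simp only [AlgHom.comp_apply] at h2
    rw [← sub_eq_zero, ← map_sub] at h2
    exact Ideal.Quotient.eq_zero_iff_mem.mp h2
  have hker : RingHom.ker φ = Ideal.span S := by
    apply le_antisymm
    · intro f hf
      have := hSφ f
      rw [RingHom.mem_ker] at hf
      rwa [hf, map_zero, sub_zero] at this
    · rw [Ideal.span_le]
      rintro _ ⟨c, rfl⟩
      simp only [SetLike.mem_coe, RingHom.mem_ker, map_sub, map_sum, map_mul, hC, hφJ]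
      simp [φ]
  have hsurj : Function.Surjective φ := by
    intro q
    refine ⟨rename J q, ?_⟩
    have : φ.comp (rename J) = AlgHom.id Ω _ := by
      apply algHom_ext
      intro j
      simp only [AlgHom.comp_apply, rename_X, hφJ, AlgHom.id_apply]
    exact congrArg (fun g => g q) this
  let T : Finset Ω := ((Finset.univ \ Finset.univ.image J) ×ˢ (Finset.univ : Finset (Fin (b + 1)))).image
    (fun x => A x.1 x.2)
  refine ⟨T, RingHom.ker φ, ?_, RingHom.ker_isPrime _, ?_, ?_, ?_⟩
  · refine Finset.card_image_le.trans ?_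
    rw [Finset.card_product, Finset.card_sdiff_of_subset (Finset.subset_univ _), Finset.card_image_of_injective _ hJinj]
    simp
  · rw [hker, Ideal.span_le]
    rintro _ ⟨c, rfl⟩
    exact hA c
  · refine defd_of_span _ S hker ?_
    rintro _ ⟨c, rfl⟩ m
    have hAc : ∀ j, A c j ∈ ACl K (T : Set Ω) := by
      intro j
      by_cases hc : c ∈ Finset.univ.image J
      · rw [Finset.mem_image] at hc
        obtain ⟨i, -, rfl⟩ := hc
        rw [hδ]
        split_ifs
        · exact one_mem _
        · exact zero_mem _
      · apply subset_ACl
        rw [Finset.mem_coe, Finset.mem_image]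
        exact ⟨(c, j), by simpa using hc, rfl⟩
    have : coeff m (X c - ∑ j, C (A c j) * X (J j)) ∈ ACl K (T : Set Ω) := by
      rw [coeff_sub, coeff_sum]
      apply sub_mem
      · rw [coeff_X]
        split_ifs
        · exact one_mem _
        · exact zero_mem _
      · apply sum_mem
        intro j _
        rw [coeff_C_mul, coeff_X]
        split_ifs
        · rw [mul_one]; exact hAc j
        · rw [mul_zero]; exact zero_mem _
    exact ⟨⟨_, this⟩, rfl⟩
  · rw [(Ideal.quotientKerAlgEquivOfSurjective hsurj).trdeg_eq, MvPolynomial.trdeg_of_isDomain]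
    simp

end start

section induct
variable {K Ω : Type*} [Field K] [Field Ω] [Algebra K Ω] [IsAlgClosed Ω]

/-- state of the induction -/
def IState (K : Type*) {Ω : Type*} [Field K] [Field Ω] [Algebra K Ω] {r : ℕ} (b : ℕ)
    (P : Ideal (MvPolynomial (Fin (r + 1)) Ω)) (F : ℕ → MvPolynomial (Fin (r + 1)) Ω) (d : ℕ → ℕ)
    (i : ℕ) (T : Finset Ω) (Q : Ideal (MvPolynomial (Fin (r + 1)) Ω)) (B : Finset ℕ) (n : ℕ) : Prop :=
  Q.IsPrime ∧ Q ≤ P ∧ defd (ACl K (T : Set Ω)) Q ∧ B ⊆ Finset.range i ∧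
  Algebra.trdeg Ω (MvPolynomial (Fin (r + 1)) Ω ⧸ Q) = ((n + 1 : ℕ) : Cardinal) ∧
  n + (Finset.range i \ B).card = b ∧
  (∀ j < i, F j ∈ Q) ∧ (∀ j < i, ∀ m, coeff m (F j) ∈ ACl K (T : Set Ω)) ∧
  T.card + ∑ j ∈ B, HH b (b - (Finset.range j \ B).card) (d j) ≤
    (r - b) * (b + 1) + ∑ j ∈ Finset.range i, (r + d j).choose (d j)

variable {r b : ℕ} {P : Ideal (MvPolynomial (Fin (r + 1)) Ω)} {F : ℕ → MvPolynomial (Fin (r + 1)) Ω} {d : ℕ → ℕ}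
    {i : ℕ} {T : Finset Ω} {Q : Ideal (MvPolynomial (Fin (r + 1)) Ω)} {B : Finset ℕ} {n : ℕ}

lemma istepA {J : Fin (b + 1) → Fin (r + 1)}
    (hJ : ∀ e : Fin (b + 1) → Ω, ∑ j, C (e j) * X (J j) ∈ P → e = 0)
    (h : IState K b P F d i T Q B n) (hF : (F i).IsHomogeneous (d i)) (hFQ : F i ∈ Q) :
    ∃ T', IState K b P F d (i + 1) T' Q (insert i B) n := by
  classical
  obtain ⟨hQp, hQP, hdef, hB, htr, hn, hFj, hFc, hT⟩ := h
  obtain ⟨w, τ, hw, hτ⟩ := stepA Q hdef b n J (fun e he => hJ e (hQP he)) htr (F i) (d i) hF hFQ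
  have hiB : i ∉ B := fun h => by have := Finset.mem_range.mp (hB h); omega
  have hsub : (T : Set Ω) ⊆ ((T ∪ Finset.univ.image τ : Finset Ω) : Set Ω) := by
    rw [Finset.coe_subset]; exact Finset.subset_union_left
  have hmono := ACl_mono (K := K) _ _ hsub
  have hcardj : ∀ j ≤ i, Finset.range j \ insert i B = Finset.range j \ B := by
    intro j hj
    ext x
    simp only [Finset.mem_sdiff, Finset.mem_range, Finset.mem_insert, not_or]
    constructor
    · rintro ⟨h1, -, h2⟩; exact ⟨h1, h2⟩
    · rintro ⟨h1, h2⟩; exact ⟨h1, by omega, h2⟩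
  have hcard : (Finset.range (i + 1) \ insert i B) = (Finset.range i \ B) := by
    rw [← hcardj i le_rfl]
    ext x
    simp only [Finset.mem_sdiff, Finset.mem_range, Finset.mem_insert, not_or]
    constructor
    · rintro ⟨h1, h3, h2⟩; exact ⟨by omega, h3, h2⟩
    · rintro ⟨h1, h3, h2⟩; exact ⟨by omega, h3, h2⟩
  refine ⟨T ∪ Finset.univ.image τ, hQp, hQP, defd_mono Q hdef (fun a => ⟨⟨a.1, hmono a.2⟩, rfl⟩), ?_, htr, ?_, ?_, ?_, ?_⟩
  · rw [Finset.range_add_one]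
    exact Finset.insert_subset_insert _ hB
  · rw [hcard]; exact hn
  · intro j hj
    rcases Nat.lt_succ_iff_lt_or_eq.mp hj with h | rfl
    · exact hFj j h
    · exact hFQ
  · intro j hj m
    rcases Nat.lt_succ_iff_lt_or_eq.mp hj with h | rfl
    · exact hmono (hFc j h m)
    · obtain ⟨e, he⟩ := hτ m
      rw [he]
      apply sum_mem
      intro l _
      apply mul_mem
      · exact hmono (e l).2
      · apply subset_ACl
        simp
  · rw [Finset.sum_insert hiB, Finset.sum_range_succ, hcardj i le_rfl]
    have e1 : ∑ j ∈ B, HH b (b - (Finset.range j \ insert i B).card) (d j) =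
       ∑ j ∈ B, HH b (b - (Finset.range j \ B).card) (d j) := by
      refine Finset.sum_congr rfl fun j hj => ?_
      rw [hcardj j (Finset.mem_range.mp (hB hj)).le]
    have e2 : b - (Finset.range i \ B).card = n := by omega
    rw [e1, e2]
    have e3 : (T ∪ Finset.univ.image τ).card ≤ T.card + w := by
      refine (Finset.card_union_le _ _).trans ?_
      have := Finset.card_image_le (s := Finset.univ) (f := τ)
      simp at this
      omega
    omega

lemma istepB (hPp : P.IsPrime) (hFP : F i ∈ P)
    (h : IState K b P F d i T Q B n) (hF : (F i).IsHomogeneous (d i)) (hFQ : F i ∉ Q)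
    (hPtr : ((1 : ℕ) : Cardinal) ≤ Algebra.trdeg Ω (MvPolynomial (Fin (r + 1)) Ω ⧸ P)) :
    ∃ T' Q', IState K b P F d (i + 1) T' Q' B (n - 1) ∧ n = n - 1 + 1 := by
  classical
  obtain ⟨hQp, hQP, hdef, hB, htr, hn, hFj, hFc, hT⟩ := h
  have hiB : i ∉ B := fun h => by have := Finset.mem_range.mp (hB h); omega
  let S : Finset Ω := (Finset.finsuppAntidiag (Finset.univ : Finset (Fin (r + 1))) (d i)).image
    (fun m => coeff m (F i))
  have hScard : S.card ≤ (r + d i).choose (d i) := by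
    refine Finset.card_image_le.trans ?_
    rw [Finset.card_finsuppAntidiag_nat_eq_choose]
    simp only [Finset.card_univ, Fintype.card_fin]
    apply le_of_eq
    congr 1; omega
  have hsub : (T : Set Ω) ⊆ ((T ∪ S : Finset Ω) : Set Ω) := by
    rw [Finset.coe_subset]; exact Finset.subset_union_left
  have hmono := ACl_mono (K := K) _ _ hsub
  have hFm : ∀ m, coeff m (F i) ∈ ACl K ((T ∪ S : Finset Ω) : Set Ω) := by
    intro m
    by_cases hm : m.degree = d i
    · apply subset_ACl
      rw [Finset.mem_coe, Finset.mem_union]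
      right
      rw [Finset.mem_image]
      refine ⟨m, ?_, rfl⟩
      rw [Finset.mem_finsuppAntidiag, ← hm, Finsupp.degree_eq_sum]
      simp
    · rw [hF.coeff_eq_zero hm]; exact zero_mem _
  obtain ⟨Q', hQ'p, hQQ', hQ'P, hFQ', hdef', htr'⟩ := stepB Q P hQP
    (defd_mono Q hdef (fun a => ⟨(⟨a.1, hmono a.2⟩ : ACl K ((T ∪ S : Finset Ω) : Set Ω)), rfl⟩)) n htr (F i) hFP hFQ
    (fun m => ⟨⟨_, hFm m⟩, rfl⟩)
  have hn1 : 1 ≤ n := by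
    have := hPtr.trans (trdeg_mono (k := Ω) Q' P hQ'P)
    rw [htr', Nat.cast_le] at this
    exact this
  have hnn : n = n - 1 + 1 := by omega
  have hcard : (Finset.range (i + 1) \ B).card = (Finset.range i \ B).card + 1 := by
    rw [Finset.range_add_one, Finset.insert_sdiff_of_notMem _ hiB, Finset.card_insert_of_notMem]
    simp
  refine ⟨T ∪ S, Q', ⟨hQ'p, hQ'P, hdef', ?_, ?_, ?_, ?_, ?_, ?_⟩, hnn⟩
  · exact hB.trans (Finset.range_mono (Nat.le_succ i))
  · rw [← hnn]; exact htr'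
  · omega
  · intro j hj
    rcases Nat.lt_succ_iff_lt_or_eq.mp hj with h | rfl
    · exact hQQ' (hFj j h)
    · exact hFQ'
  · intro j hj m
    rcases Nat.lt_succ_iff_lt_or_eq.mp hj with h | rfl
    · exact hmono (hFc j h m)
    · exact hFm m
  · rw [Finset.sum_range_succ]
    have := Finset.card_union_le T S
    omega

theorem ultra_induct {k m : ℕ} (hk : 1 ≤ k) (hPp : P.IsPrime)
    (J : Fin (b + 1) → Fin (r + 1)) (A : Fin (r + 1) → Fin (b + 1) → Ω)
    (hA : ∀ c, X c - ∑ j, C (A c j) * X (J j) ∈ P)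
    (hJ : ∀ e : Fin (b + 1) → Ω, ∑ j, C (e j) * X (J j) ∈ P → e = 0)
    (hF : ∀ j < k, (F j).IsHomogeneous (d j)) (hFP : ∀ j < k, F j ∈ P)
    (hPtr : ((m + 1 : ℕ) : Cardinal) ≤ Algebra.trdeg Ω (MvPolynomial (Fin (r + 1)) Ω ⧸ P))
    (hlast : ∀ Q : Ideal (MvPolynomial (Fin (r + 1)) Ω), Q.IsPrime → Q ≤ P → (∀ j < k - 1, F j ∈ Q) →
        ¬ ((m + 1 + 1 : ℕ) : Cardinal) ≤ Algebra.trdeg Ω (MvPolynomial (Fin (r + 1)) Ω ⧸ Q)) :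
    ∃ (T : Finset Ω) (B : Finset ℕ), B ⊆ Finset.range k ∧ k - 1 ∈ B ∧ B.card + b = k + m ∧
      (Finset.range k \ B).card ≤ b ∧
      (∀ j < k, ∀ n, coeff n (F j) ∈ ACl K (T : Set Ω)) ∧
      T.card + ∑ j ∈ B, HH b (b - (Finset.range j \ B).card) (d j) ≤
        (r - b) * (b + 1) + ∑ j ∈ Finset.range k, (r + d j).choose (d j) := by
  classical
  have hPtr1 : ((1 : ℕ) : Cardinal) ≤ Algebra.trdeg Ω (MvPolynomial (Fin (r + 1)) Ω ⧸ P) :=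
    le_trans (by exact_mod_cast (by omega : 1 ≤ m + 1)) hPtr
  have hind : ∀ i ≤ k - 1, ∃ T Q B n, IState K b P F d i T Q B n := by
    intro i
    induction i with
    | zero =>
      intro _
      obtain ⟨T, Q, hT, hQp, hQP, hdef, htr⟩ := start_lemma (K := K) P J A hA hJ
      exact ⟨T, Q, ∅, b, hQp, hQP, hdef, by simp, htr, by simp, by simp, by simp, by simpa using hT⟩
    | succ i ih =>
      intro hi
      obtain ⟨T, Q, B, n, h⟩ := ih (by omega)
      by_cases hFQ : F i ∈ Q
      · obtain ⟨T', h'⟩ := istepA hJ h (hF i (by omega)) hFQ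
        exact ⟨_, _, _, _, h'⟩
      · obtain ⟨T', Q', h', -⟩ := istepB hPp (hFP i (by omega)) h (hF i (by omega)) hFQ hPtr1
        exact ⟨_, _, _, _, h'⟩
  obtain ⟨T, Q, B, n, h⟩ := hind (k - 1) le_rfl
  have hlt : n ≤ m := by
    obtain ⟨hQp, hQP, hdef, hB, htr, hn, hFj, hFc, hT⟩ := h
    have := hlast Q hQp hQP hFj
    rw [htr, Nat.cast_le] at this
    omega
  have hle : ∀ {i T Q B n}, IState K b P F d i T Q B n → m ≤ n := by
    intro i T Q B n h
    obtain ⟨hQp, hQP, hdef, hB, htr, hn, hFj, hFc, hT⟩ := h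
    have := hPtr.trans (trdeg_mono (k := Ω) Q P hQP)
    rw [htr, Nat.cast_le] at this
    omega
  have hFQ : F (k - 1) ∈ Q := by
    by_contra hFQ
    obtain ⟨T', Q', h', h3⟩ := istepB hPp (hFP _ (by omega)) h (hF _ (by omega)) hFQ hPtr1
    have := hle h'
    omega
  have hmn := hle h
  obtain ⟨T', h'⟩ := istepA hJ h (hF _ (by omega)) hFQ
  have hkk : k - 1 + 1 = k := by omega
  rw [hkk] at h'
  obtain ⟨hQp, hQP, hdef, hB, htr, hn, hFj, hFc, hT⟩ := h'
  refine ⟨T', insert (k - 1) B, hB, by simp, ?_, by omega, hFc, hT⟩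
  have := Finset.card_sdiff_add_card_eq_card hB
  rw [Finset.card_range] at this
  omega
end induct

end part14

section part15
open MvPolynomial

section top
variable {K : Type*} [Field K] {M : Type*} [AddCommGroup M] [Module K M]

/-- vanishing ideal -/
noncomputable def vanI (K : Type*) [Field K] {M : Type*} [AddCommGroup M] [Module K M] (Y : Set M) :
    Ideal (MvPolynomial (M →ₗ[K] K) K) where
  carrier := {p | ∀ v ∈ Y, polyEval K M p v = 0}
  add_mem' := by
    intro p q hp hq v hv
    have h1 := hp v hv
    have h2 := hq v hv
    simp only [polyEval] at *
    rw [map_add, h1, h2, add_zero]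
  zero_mem' := by
    intro v _
    simp [polyEval]
  smul_mem' := by
    intro c p hp v hv
    rw [smul_eq_mul, polyEval_mul, hp v hv, mul_zero]

lemma mem_vanI (Y : Set M) (p : MvPolynomial (M →ₗ[K] K) K) :
    p ∈ vanI K Y ↔ ∀ v ∈ Y, polyEval K M p v = 0 := Iff.rfl

lemma vanI_anti {Y Y' : Set M} (h : Y ⊆ Y') : vanI K Y' ≤ vanI K Y :=
  fun _ hp v hv => hp v (h hv)

lemma zclosed_iff (Y : Set M) : @IsClosed M (zariskiTopology K M) Y ↔ Y ∈ zariskiCloseds K M := by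
  letI := zariskiTopology K M
  rw [← isOpen_compl_iff]
  show Yᶜᶜ ∈ zariskiCloseds K M ↔ _
  rw [compl_compl]

lemma vanI_prime (Y : Set M) (h : @IsIrreducible M (zariskiTopology K M) Y) : (vanI K Y).IsPrime := by
  letI := zariskiTopology K M
  refine ⟨?_, ?_⟩
  · intro ht
    obtain ⟨v, hv⟩ := h.1
    have h1 : (1 : MvPolynomial (M →ₗ[K] K) K) ∈ vanI K Y := by rw [ht]; trivial
    have := h1 v hv
    simp [polyEval] at this
  · intro p q hpq
    have hcl : ∀ p : MvPolynomial (M →ₗ[K] K) K, IsClosed {v : M | polyEval K M p v = 0} := by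
      intro p
      rw [zclosed_iff]
      exact ⟨{p}, by simp⟩
    have := (isPreirreducible_iff_isClosed_union_isClosed.mp h.2) _ _ (hcl p) (hcl q) (by
      intro v hv
      have := hpq v hv
      rw [polyEval_mul] at this
      exact mul_eq_zero.mp this)
    exact this.imp (fun h v hv => h hv) (fun h v hv => h hv)

lemma vanI_inj {Y Y' : Set M} (h : @IsClosed M (zariskiTopology K M) Y) (h' : vanI K Y ≤ vanI K Y') :
    Y' ⊆ Y := by
  rw [zclosed_iff] at h
  obtain ⟨S, rfl⟩ := h
  intro v hv p hp
  exact h' (show p ∈ vanI K _ from fun w hw => hw p hp) v hv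

lemma exists_chain [t : TopologicalSpace M] (ht : t = zariskiTopology K M) (X : Set M)
    (p : LTSeries (TopologicalSpace.IrreducibleCloseds ↥(closure X))) :
    ∃ s : ℕ → Ideal (MvPolynomial (M →ₗ[K] K) K), (∀ i ≤ p.length, (s i).IsPrime) ∧
      (∀ i, i < p.length → s i < s (i + 1)) ∧ vanI K X ≤ s 0 := by
  subst ht
  letI := zariskiTopology K M
  let im : TopologicalSpace.IrreducibleCloseds ↥(closure X) → Set M := fun Z => Subtype.val '' (Z : Set ↥(closure X))
  have him1 : ∀ Z, IsClosed (im Z) := fun Z =>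
    isClosed_closure.isClosedEmbedding_subtypeVal.isClosedMap _ Z.isClosed
  have him2 : ∀ Z, IsIrreducible (im Z) := fun Z =>
    Z.isIrreducible.image _ continuous_subtype_val.continuousOn
  have hlt : ∀ Z Z', Z < Z' → vanI K (im Z') < vanI K (im Z) := by
    intro Z Z' h
    refine lt_of_le_not_ge (vanI_anti (Set.image_mono h.le)) ?_
    intro h'
    have h3 := vanI_inj (him1 Z) h'
    have h4 : (Z' : Set ↥(closure X)) ⊆ Z := (Set.image_subset_image_iff Subtype.val_injective).mp h3
    exact h.not_ge h4
  have hX : ∀ Z, vanI K X ≤ vanI K (im Z) := by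
    intro Z
    intro q hq
    have h1 : closure X ⊆ {v | polyEval K M q v = 0} := by
      exact closure_minimal (t := {v | polyEval K M q v = 0}) hq ((zclosed_iff _).mpr ⟨{q}, by simp⟩)
    rintro _ ⟨v, _, rfl⟩
    exact h1 v.2
  refine ⟨fun i => vanI K (im (p ⟨p.length - i, by omega⟩)), ?_, ?_, hX _⟩
  · intro i _
    exact vanI_prime _ (him2 _)
  · intro i hi
    apply hlt
    apply p.strictMono
    show p.length - (i+1) < p.length - i
    omega

end top

section ultra
variable {K : Type*} [Field K] {M : Type*} [AddCommGroup M] [Module K M]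

lemma exists_ultra (X : Set M) (q : Ideal (MvPolynomial (M →ₗ[K] K) K)) (hq : q.IsPrime)
    (hX : vanI K X ≤ q) :
    ∃ U : Ultrafilter X, ∀ g, (∀ᶠ x in (U : Filter X), polyEval K M g x.1 = 0) → g ∈ q := by
  classical
  obtain ⟨U, hU⟩ := Ultrafilter.exists_ultrafilter_of_finite_inter_nonempty
    {s : Set X | ∃ g, g ∉ q ∧ s = {x : X | polyEval K M g x.1 ≠ 0}} (by
      intro T hT
      choose! g hg1 hg2 using fun (s : Set X) (hs : s ∈ T) => hT hs
      have hprod : (∏ s ∈ T, g s) ∉ q := by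
        rw [hq.prod_mem_iff]
        push Not
        exact fun s hs => hg1 s hs
      have h2 : (∏ s ∈ T, g s) ∉ vanI K X := fun h => hprod (hX h)
      rw [mem_vanI] at h2
      push Not at h2
      obtain ⟨v, hv, hne⟩ := h2
      refine ⟨⟨v, hv⟩, ?_⟩
      intro s hs
      rw [hg2 s hs]
      have h3 : polyEval K M (∏ s ∈ T, g s) v = ∏ s ∈ T, polyEval K M (g s) v := by
        simp only [polyEval]
        rw [map_prod]
      rw [h3] at hne
      exact Finset.prod_ne_zero_iff.mp hne s hs)
  refine ⟨U, fun g hg => ?_⟩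
  by_contra hgq
  have h1 : ∀ᶠ x in (U : Filter X), polyEval K M g x.1 ≠ 0 := hU ⟨g, hgq, rfl⟩
  obtain ⟨x, hx1, hx2⟩ := (hg.and h1).exists
  exact hx2 hx1

/-- the ultraproduct ideal -/
def ulI (K : Type*) [Field K] {I : Type*} (U : Ultrafilter I) : Ideal (I → K) where
  carrier := {f | ∀ᶠ i in (U : Filter I), f i = 0}
  add_mem' := by
    intro f g hf hg
    filter_upwards [hf, hg] with i h1 h2
    simp [h1, h2]
  zero_mem' := by simp
  smul_mem' := by
    intro c f hf
    filter_upwards [hf] with i h1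
    simp [h1]

lemma ulI_max {I : Type*} (U : Ultrafilter I) : (ulI K U).IsMaximal := by
  classical
  rw [Ideal.isMaximal_iff]
  refine ⟨?_, ?_⟩
  · intro h
    have h1 : ∀ᶠ i in (U : Filter I), (1 : I → K) i = 0 := h
    obtain ⟨i, hi⟩ := h1.exists
    exact one_ne_zero hi
  · intro J f hJ hf hfJ
    have hne : ∀ᶠ i in (U : Filter I), f i ≠ 0 := Ultrafilter.eventually_not.mpr hf
    have h1 : (1 - f * f⁻¹ : I → K) ∈ ulI K U := by
      show ∀ᶠ i in (U : Filter I), _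
      filter_upwards [hne] with i hi
      simp [hi]
    have := J.add_mem (hJ h1) (J.mul_mem_right f⁻¹ hfJ)
    simpa using this

lemma theta_trdeg {Ω : Type*} [Field Ω] [Algebra K Ω] {R : Type*} [CommRing R] [Algebra K R]
    (θ : R →ₐ[K] Ω) (T : Finset Ω) (hT : ∀ x, θ x ∈ ACl K (T : Set Ω)) (q : Ideal R) (hq : RingHom.ker θ ≤ q)
    (l : ℕ) (hl : (l : Cardinal) ≤ Algebra.trdeg K (R ⧸ q)) : l ≤ T.card := by
  have h1 := hl.trans (trdeg_mono _ _ hq)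
  haveI : (RingHom.ker θ).IsPrime := RingHom.ker_isPrime _
  rw [le_trdeg_iff] at h1
  obtain ⟨x, hx⟩ := h1
  let θ' : R →ₐ[K] ACl K (T : Set Ω) := θ.codRestrict (ACl K (T : Set Ω)).toSubalgebra hT
  have hk : ∀ a ∈ RingHom.ker θ, θ' a = 0 := by
    intro a ha
    apply Subtype.ext
    exact ha
  let ψ := Ideal.Quotient.liftₐ (RingHom.ker θ) θ' hk
  have hψ : Function.Injective ψ := by
    rw [injective_iff_map_eq_zero]
    intro a
    obtain ⟨a, rfl⟩ := Ideal.Quotient.mk_surjective a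
    intro h
    rw [Ideal.Quotient.eq_zero_iff_mem]
    have h2 : θ' a = 0 := h
    exact congrArg Subtype.val h2
  exact ACl_trdeg T l (fun j => ψ (x j)) (hx.map' (f := ψ) hψ)

end ultra

end part15

section part16
open MvPolynomial

section geom
variable {K : Type*} [Field K]

lemma phi_expand1 (r e : ℕ) (φ : ↥(homogeneousSubmodule (Fin (r + 1)) K e) →ₗ[K] K) :
    ∃ c : (Fin (r + 1) →₀ ℕ) → K, ∀ x, φ x =
      ∑ n ∈ Finset.finsuppAntidiag Finset.univ e, c n * coeff n (x : MvPolynomial (Fin (r + 1)) K) := by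
  classical
  let mo : (Fin (r + 1) →₀ ℕ) → ↥(homogeneousSubmodule (Fin (r + 1)) K e) := fun n =>
    if h : n.degree = e then ⟨monomial n 1, by
      rw [mem_homogeneousSubmodule]; exact isHomogeneous_monomial _ h⟩ else 0
  refine ⟨fun n => φ (mo n), fun x => ?_⟩
  have hdeg : ∀ n : Fin (r + 1) →₀ ℕ, n ∈ Finset.finsuppAntidiag Finset.univ e ↔ n.degree = e := by
    intro n
    rw [Finset.mem_finsuppAntidiag, Finsupp.degree_eq_sum]
    simp
  have hx : x = ∑ n ∈ Finset.finsuppAntidiag Finset.univ e, coeff n (x : MvPolynomial (Fin (r + 1)) K) • mo n := by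
    apply Subtype.ext
    rw [Submodule.coe_sum]
    have h1 : ∀ n ∈ Finset.finsuppAntidiag Finset.univ e,
        ((coeff n (x : MvPolynomial (Fin (r + 1)) K) • mo n : ↥(homogeneousSubmodule (Fin (r + 1)) K e)) : MvPolynomial (Fin (r + 1)) K) =
          monomial n (coeff n (x : MvPolynomial (Fin (r + 1)) K)) := by
      intro n hn
      rw [hdeg] at hn
      simp [mo, hn, smul_monomial]
    rw [Finset.sum_congr rfl h1]
    ext n
    rw [coeff_sum]
    simp only [coeff_monomial]
    rw [Finset.sum_ite_eq']
    split_ifs with h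
    · rfl
    · rw [hdeg] at h
      have h2 := (mem_homogeneousSubmodule _ _).mp x.2
      exact h2.coeff_eq_zero h
  conv_lhs => rw [hx]
  rw [map_sum]
  refine Finset.sum_congr rfl fun n _ => ?_
  rw [map_smul, smul_eq_mul, mul_comm]

lemma phi_expand (r k : ℕ) (d : Fin k → ℕ) (φ : tupleSpace K r k d →ₗ[K] K) :
    ∃ c : Fin k → (Fin (r + 1) →₀ ℕ) → K, ∀ x : tupleSpace K r k d, φ x =
      ∑ j, ∑ n ∈ Finset.finsuppAntidiag Finset.univ (d j), c j n * coeff n (x j : MvPolynomial (Fin (r + 1)) K) := by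
  classical
  choose c hc using fun j => phi_expand1 r (d j) (φ ∘ₗ LinearMap.single K (fun i : Fin k => ↥(homogeneousSubmodule (Fin (r + 1)) K (d i))) j)
  refine ⟨c, fun x => ?_⟩
  conv_lhs => rw [← Finset.univ_sum_single x]
  rw [map_sum]
  refine Finset.sum_congr rfl fun j _ => ?_
  rw [← hc j (x j)]
  rfl

theorem chain_bound [IsAlgClosed K] (r a b k : ℕ)
    (hk1 : 1 ≤ k) (hbr : b ≤ r)
    (d : Fin k → ℕ) (dn : ℕ → ℕ) (hdn : ∀ j : Fin k, dn j = d j)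
    (X : Set (tupleSpace K r k d))
    (hX : X = {F | memPhiSpan K a b F ∧
      ¬ vdimGE r (k - 1)
        (fun i : Fin (k - 1) =>
          (F (Fin.castLE (Nat.sub_le k 1) i) : MvPolynomial (Fin (r + 1)) K))
        ((r : ℤ) - (k - 1 : ℕ) + a)})
    (p : LTSeries (TopologicalSpace.IrreducibleCloseds ↥(closure X))) :
    ∃ B : Finset ℕ, B ⊆ Finset.range k ∧ k - 1 ∈ B ∧ B.card = r - b + a ∧
      (Finset.range k \ B).card ≤ b ∧
      p.length + ∑ j ∈ B, HH b (b - (Finset.range j \ B).card) (dn j) ≤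
        (r - b) * (b + 1) + ∑ j ∈ Finset.range k, (r + dn j).choose (dn j) := by
  classical
  obtain ⟨s, hs1, hs2, hs3⟩ := exists_chain (K := K) rfl X p
  have hl := chain_trdeg (k := K) p.length s hs1 hs2
  obtain ⟨U, hU⟩ := exists_ultra X (s 0) (hs1 0 (Nat.zero_le _)) hs3
  haveI := ulI_max (K := K) U
  letI : Field ((X → K) ⧸ ulI K U) := Ideal.Quotient.field _
  let π0 : (X → K) →ₐ[K] ((X → K) ⧸ ulI K U) := Ideal.Quotient.mkₐ K _
  have hπs : Function.Surjective π0 := Ideal.Quotient.mk_surjective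
  have hπ0 : ∀ f, π0 f = 0 ↔ ∀ᶠ i in (U : Filter X), f i = 0 := fun f =>
    Ideal.Quotient.eq_zero_iff_mem
  haveI : IsAlgClosed ((X → K) ⧸ ulI K U) := ultra_algClosed hπs
  have hmem : ∀ x : X, memPhiSpan K a b x.1 ∧
      ¬ vdimGE r (k - 1)
        (fun i : Fin (k - 1) =>
          (x.1 (Fin.castLE (Nat.sub_le k 1) i) : MvPolynomial (Fin (r + 1)) K))
        ((r : ℤ) - (k - 1 : ℕ) + a) := by
    intro x
    exact (Set.ext_iff.mp hX x.1).mp x.2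
  choose P0 hP0 hPh hGP hPd Λ hΛ hPΛ using fun x => (hmem x).1
  have hne : Nonempty X := U.neBot.nonempty
  obtain ⟨m, hm⟩ : ∃ m : ℕ, (m : ℤ) = (r : ℤ) - k + a := ⟨_, (hPd hne.some).choose_spec.1⟩
  have hpt : ∀ x, ((m + 1 : ℕ) : Cardinal) ≤ Algebra.trdeg K (MvPolynomial (Fin (r + 1)) K ⧸ P0 x) := by
    intro x
    obtain ⟨m', hm', hdim⟩ := hPd x
    have : m' = m := by omega
    subst this
    haveI := hP0 x
    exact trdeg_ge_of_dim _ _ hdim.ge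
  obtain ⟨F, P, J, A, hPp, hFP, hFh, hFc, hPt, hA, hJ, hlast⟩ :=
    ultra_package (m := m) (b := b) hπs hπ0 d (fun x j => (x.1 j : MvPolynomial (Fin (r + 1)) K))
      (fun x j => (mem_homogeneousSubmodule _ _).mp (x.1 j).2) P0 hP0
      (fun x j => hGP x (Ideal.subset_span ⟨j, rfl⟩))
      (by
        intro x f hf
        have h1 := hPh x f hf 0
        rw [homogeneousComponent_zero] at h1
        rw [← constantCoeff_eq] at h1
        have h0 : eval 0 f = constantCoeff f := by
          exact DFunLike.congr_fun eval_zero f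
        rw [h0]
        by_contra hc
        exact (hP0 x).ne_top (Ideal.eq_top_of_isUnit_mem _ h1 ((isUnit_iff_ne_zero.mpr hc).map C)))
      hpt Λ hΛ hPΛ {j | j.1 < k - 1}
      (by
        intro x Q hQ hle htr
        apply (hmem x).2
        have h2 : ((r : ℤ) - (k - 1 : ℕ) + a).toNat + 1 = m + 1 + 1 := by omega
        unfold vdimGE
        rw [h2]
        refine dim_ge_of_trdeg _ Q ?_ _ htr
        rw [Ideal.span_le]
        rintro _ ⟨i, rfl⟩
        exact hle (Ideal.subset_span ⟨⟨Fin.castLE (Nat.sub_le k 1) i, i.2⟩, rfl⟩))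
  let Fn : ℕ → MvPolynomial (Fin (r + 1)) ((X → K) ⧸ ulI K U) := fun j => if h : j < k then F ⟨j, h⟩ else 0
  have hFn : ∀ j (h : j < k), Fn j = F ⟨j, h⟩ := fun j h => by simp [Fn, h]
  obtain ⟨T, B, hB1, hB2, hB3, hB4, hB5, hB6⟩ := ultra_induct (K := K) (F := Fn) (d := dn) (m := m) hk1 hPp J A hA hJ
    (by intro j hj; rw [hFn j hj, hdn ⟨j, hj⟩]; exact hFh _)
    (by intro j hj; rw [hFn j hj]; exact hFP _) hPt
    (by
      intro Q hQ hQP h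
      refine hlast Q hQ hQP ?_
      intro j hj
      have := h j.1 hj
      rwa [hFn j.1 j.2] at this)
  refine ⟨B, hB1, hB2, by omega, hB4, ?_⟩
  let θ : MvPolynomial (tupleSpace K r k d →ₗ[K] K) K →ₐ[K] ((X → K) ⧸ ulI K U) :=
    aeval (fun φ => π0 (fun x => φ x.1))
  have hθ : ∀ g, θ g = π0 (fun x => polyEval K _ g x.1) := by
    intro g
    let ev : MvPolynomial (tupleSpace K r k d →ₗ[K] K) K →ₐ[K] (X → K) := aeval (fun φ => fun x => φ x.1)
    have h1 : θ = π0.comp ev := by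
      ext φ
      simp [θ, ev]
    rw [h1, AlgHom.comp_apply]
    congr 1
    funext x
    have h2 : (Pi.evalAlgHom K (fun _ : X => K) x).comp ev = aeval (fun φ : tupleSpace K r k d →ₗ[K] K => φ x.1) := by
      ext φ
      simp [ev]
    have h3 := DFunLike.congr_fun h2 g
    exact h3
  have hker : RingHom.ker θ ≤ s 0 := by
    intro g hg
    apply hU
    rw [← hπ0, ← hθ]
    exact hg
  have hT : ∀ g, θ g ∈ ACl K (T : Set ((X → K) ⧸ ulI K U)) := by
    intro g
    have h1 : g ∈ (⊤ : Subalgebra K _) := trivial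
    rw [← adjoin_range_X] at h1
    have h2 : Algebra.adjoin K (Set.range (MvPolynomial.X : (tupleSpace K r k d →ₗ[K] K) → MvPolynomial _ K)) ≤
        (ACl K (T : Set ((X → K) ⧸ ulI K U))).toSubalgebra.comap θ := by
      rw [Algebra.adjoin_le_iff]
      rintro _ ⟨φ, rfl⟩
      show θ _ ∈ ACl K (T : Set ((X → K) ⧸ ulI K U))
      obtain ⟨c, hc⟩ := phi_expand r k d φ
      have h4 : θ (MvPolynomial.X φ) = ∑ j, ∑ n ∈ Finset.finsuppAntidiag Finset.univ (d j), c j n • coeff n (F j) := by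
        simp only [hFc, ← map_smul, ← map_sum]
        show aeval _ _ = _
        rw [aeval_X]
        congr 1
        funext x
        rw [hc]
        simp
      rw [h4]
      refine sum_mem fun j _ => sum_mem fun n _ => ?_
      have h5 := hB5 j.1 j.2 n
      rw [hFn j.1 j.2] at h5
      exact (ACl K (T : Set ((X → K) ⧸ ulI K U))).smul_mem h5
    exact h2 h1
  have := theta_trdeg θ T hT (s 0) hker _ hl
  omega
end geom

end part16

open MvPolynomial

section comb

lemma hpoly_eq (b n d : ℕ) (hn : n ≤ b) (hd : 1 ≤ d) : hpoly b n d = HH b n d := by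
  obtain ⟨e, rfl⟩ : ∃ e, d = e + 1 := ⟨d - 1, by omega⟩
  unfold hpoly HH
  have h1 : (((e + 1 : ℕ) : ℤ) + n - 1).toNat = e + n := by omega
  have h2 : (((e + 1 : ℕ) : ℤ) - 1).toNat = e := by omega
  have h3 : (((e + 1 : ℕ) : ℤ) + n).toNat = e + 1 + n := by omega
  have h4 : ((e + 1 : ℕ) : ℤ).toNat = e + 1 := by omega
  rw [h1, h2, h3, h4]
  have h5 : (e + n).choose e = (e + n).choose n := Nat.choose_symm_add
  have h6 : (e + 1 + n).choose (e + 1) = (e + 1 + n).choose n := Nat.choose_symm_add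
  rw [h5, h6]
  simp only [Nat.add_one_ne_zero, if_false, Nat.add_sub_cancel]
  push_cast [Nat.cast_sub hn]
  ring

lemma comb_ι (b k s : ℕ) (hs : 1 ≤ s) (hk1 : 1 ≤ k) (d : Fin k → ℕ) (hd1 : ∀ i, 1 ≤ d i) (dn : ℕ → ℕ)
    (hdn : ∀ j : Fin k, dn j = d j) (B : Finset ℕ) (hB1 : B ⊆ Finset.range k) (hB2 : k - 1 ∈ B)
    (hB3 : B.card = s) (hB4 : (Finset.range k \ B).card ≤ b) :
    ∃ ι : Fin s → Fin k, StrictMono ι ∧ ι ⟨s - 1, by omega⟩ = ⟨k - 1, by omega⟩ ∧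
      ∑ j : Fin s, hpoly (b : ℤ) ((b : ℤ) - ((ι j : ℕ) : ℤ) + ((j : ℕ) : ℤ)) (d (ι j)) =
        ((∑ j ∈ B, HH b (b - (Finset.range j \ B).card) (dn j) : ℕ) : ℤ) := by
  classical
  let e := B.orderEmbOfFin hB3
  have he : ∀ j, e j ∈ B := fun j => B.orderEmbOfFin_mem hB3 j
  have hek : ∀ j, e j < k := fun j => Finset.mem_range.mp (hB1 (he j))
  have him : Finset.univ.image e = B := by
    apply Finset.coe_injective
    simp [e]
  refine ⟨fun j => ⟨e j, hek j⟩, fun i j h => e.strictMono h, ?_, ?_⟩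
  · apply Fin.ext
    show e _ = k - 1
    have h1 : k - 1 ∈ Finset.univ.image e := by rw [him]; exact hB2
    obtain ⟨j, _, hj⟩ := Finset.mem_image.mp h1
    have h2 : e j ≤ e ⟨s - 1, by omega⟩ := e.monotone (by
      show j.1 ≤ s - 1
      omega)
    have := hek ⟨s - 1, by omega⟩
    omega
  · have hsum : ∑ j ∈ B, HH b (b - (Finset.range j \ B).card) (dn j) =
        ∑ j : Fin s, HH b (b - (Finset.range (e j) \ B).card) (dn (e j)) := by
      rw [← Finset.sum_image (s := Finset.univ) (g := e)
        (f := fun j => HH b (b - (Finset.range j \ B).card) (dn j)) (fun _ _ _ _ h => e.injective h), him]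
    rw [hsum]
    rw [Nat.cast_sum]
    refine Finset.sum_congr rfl fun j _ => ?_
    have h1 : (Finset.range (e j) ∩ B) = (Finset.univ.filter (fun i : Fin s => i < j)).image e := by
      ext x
      simp only [Finset.mem_inter, Finset.mem_range, Finset.mem_image, Finset.mem_filter, Finset.mem_univ, true_and]
      constructor
      · rintro ⟨hx, hxB⟩
        rw [← him] at hxB
        obtain ⟨i, _, rfl⟩ := Finset.mem_image.mp hxB
        exact ⟨i, e.lt_iff_lt.mp hx, rfl⟩
      · rintro ⟨i, hi, rfl⟩
        exact ⟨e.lt_iff_lt.mpr hi, he i⟩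
    have h2 : (Finset.range (e j) ∩ B).card = j := by
      rw [h1, Finset.card_image_of_injective _ e.injective]
      have h7 : (Finset.univ.filter (fun i : Fin s => i < j)) = Finset.Iio j := by
        ext i
        rw [Finset.mem_filter, Finset.mem_Iio]
        exact ⟨fun h => h.2, fun h => ⟨Finset.mem_univ _, h⟩⟩
      rw [h7, Fin.card_Iio]
    have h3 : (Finset.range (e j) \ B).card + j = e j := by
      have := Finset.card_sdiff_add_card_inter (Finset.range (e j)) B
      rw [h2, Finset.card_range] at this
      exact this
    have h4 : (Finset.range (e j) \ B).card ≤ b :=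
      le_trans (Finset.card_le_card (Finset.sdiff_subset_sdiff (Finset.range_subset_range.mpr (hek j).le) le_rfl)) hB4
    rw [hdn ⟨e j, hek j⟩, ← hpoly_eq _ _ _ (Nat.sub_le _ _) (hd1 _)]
    congr 1
    push_cast [Nat.cast_sub h4]
    have : ((Finset.range (e j) \ B).card : ℤ) + j = e j := by exact_mod_cast h3
    omega

lemma toZ_le (α : Type*) [Preorder α] (N : ℤ) (h : ∀ p : LTSeries α, (p.length : ℤ) ≤ N) :
    toZDim (Order.krullDim α) ≤ ((N : WithTop ℤ) : WithBot (WithTop ℤ)) := by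
  rcases isEmpty_or_nonempty α with he | hne
  · rw [Order.krullDim_eq_bot]
    exact bot_le
  · have h0 : (0 : ℤ) ≤ N := by
      simpa using h (RelSeries.singleton _ hne.some)
    obtain ⟨n, rfl⟩ := Int.eq_ofNat_of_zero_le h0
    have h1 : Order.krullDim α ≤ ((n : ℕ∞) : WithBot ℕ∞) := by
      apply iSup_le
      intro p
      have := h p
      exact_mod_cast (by exact_mod_cast this : p.length ≤ n)
    have hm : Monotone toZDim := by
      unfold toZDim
      apply WithBot.monotone_map_iff.mpr
      apply WithTop.monotone_map_iff.mpr
      exact Nat.mono_cast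
    exact hm h1

end comb

noncomputable section Statement3
open MvPolynomial

variable (K : Type*) [Field K]

theorem statement3 [IsAlgClosed K] (r a b k : ℕ)
    (hr : 1 ≤ r) (ha : 1 ≤ a) (hb1 : 1 ≤ b) (hbr : b ≤ r) (hk1 : 1 ≤ k)
    (hk : r - b + a ≤ k)
    (d : Fin k → ℕ) (hd1 : ∀ i, 1 ≤ d i) (hmono : Monotone d)
    (X : Set (tupleSpace K r k d))
    (hX : X = {F | memPhiSpan K a b F ∧
      ¬ vdimGE r (k - 1)
        (fun i : Fin (k - 1) =>
          (F (Fin.castLE (Nat.sub_le k 1) i) : MvPolynomial (Fin (r + 1)) K))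
        ((r : ℤ) - (k - 1 : ℕ) + a)}) :
    ∃ ι : Fin (r - b + a) → Fin k, StrictMono ι ∧
      ι ⟨r - b + a - 1, by omega⟩ = ⟨k - 1, by omega⟩ ∧
      toZDim (dimSet X) ≤
        ((((∑ i : Fin k, ((r + d i).choose (d i) : ℤ)) -
          (-(((b : ℤ) + 1) * ((r : ℤ) - (b : ℤ))) +
            ∑ j : Fin (r - b + a),
              hpoly (b : ℤ) ((b : ℤ) - ((ι j : ℕ) : ℤ) + ((j : ℕ) : ℤ)) (d (ι j))) :
          ℤ) : WithTop ℤ) : WithBot (WithTop ℤ)) := by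
  classical
  let dn : ℕ → ℕ := fun j => if h : j < k then d ⟨j, h⟩ else 0
  have hdn : ∀ j : Fin k, dn j = d j := fun j => by simp [dn]
  let bd : (Fin (r - b + a) → Fin k) → ℤ := fun ι => ∑ j : Fin (r - b + a),
              hpoly (b : ℤ) ((b : ℤ) - ((ι j : ℕ) : ℤ) + ((j : ℕ) : ℤ)) (d (ι j))
  let Ad : Finset (Fin (r - b + a) → Fin k) := Finset.univ.filter fun ι =>
    StrictMono ι ∧ ι ⟨r - b + a - 1, by omega⟩ = ⟨k - 1, by omega⟩
  have hAd : Ad.Nonempty := by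
    refine ⟨fun j => ⟨k - (r - b + a) + j, by omega⟩, ?_⟩
    simp only [Ad, Finset.mem_filter, Finset.mem_univ, true_and]
    refine ⟨?_, ?_⟩
    · intro i j h
      have : i.1 < j.1 := h
      show k - (r - b + a) + i.1 < k - (r - b + a) + j.1
      omega
    · apply Fin.ext
      show k - (r - b + a) + (r - b + a - 1) = k - 1
      omega
  obtain ⟨ι, hι, hmin⟩ := Finset.exists_min_image Ad bd hAd
  have hι' := (Finset.mem_filter.mp hι).2
  refine ⟨ι, hι'.1, hι'.2, ?_⟩
  apply toZ_le
  intro p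
  obtain ⟨B, hB1, hB2, hB3, hB4, hB5⟩ := chain_bound r a b k hk1 hbr d dn hdn X hX p
  obtain ⟨ι', h1, h2, h3⟩ := comb_ι b k (r - b + a) (by omega) hk1 d hd1 dn hdn B hB1 hB2 hB3 hB4
  have h4 : bd ι ≤ bd ι' := hmin ι' (Finset.mem_filter.mpr ⟨Finset.mem_univ _, h1, h2⟩)
  have h5 : bd ι' = _ := h3
  have h6 : ∑ j ∈ Finset.range k, (r + dn j).choose (dn j) = ∑ i : Fin k, (r + d i).choose (d i) := by
    rw [Finset.sum_range]
    simp only [hdn]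
  rw [h6] at hB5
  zify at hB5
  push_cast [Nat.cast_sub hbr] at hB5 h5
  show (p.length : ℤ) ≤ _ - (_ + bd ι)
  linarith

end Statement3
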